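/- arXiv:2001.00514 — 9 statements merged into one kernel-verified Lean document; each statement's English description precedes it below -/
import Mathlib

section
/- McCormick's convex envelope theorem for a bilinear term: let ℓ₁ ≤ u₁ and ℓ₂ ≤ u₂ be real numbers and let R = [ℓ₁,u₁] × [ℓ₂,u₂] ⊆ ℝ². Define g(x₁,x₂) = max(u₂x₁ + u₁x₂ − u₁u₂, ℓ₂x₁ + ℓ₁x₂ − ℓ₁ℓ₂). Then g is convex on R, g(x₁,x₂) ≤ x₁·x₂ for all (x₁,x₂) ∈ R, and for every function h : ℝ² → ℝ that is convex on R and satisfies h(x₁,x₂) ≤ x₁·x₂ for all (x₁,x₂) ∈ R, one has h(x₁,x₂) ≤ g(x₁,x₂) for all (x₁,x₂) ∈ R; that is, g is the convex envelope of the bilinear function (x₁,x₂) ↦ x₁·x₂ on R. -/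
/-!
The plane `T_{a,b}` tangent to the graph of the product at `(a, b)` satisfies
`x * y - T_{a,b}(x, y) = (x - a) * (y - b)`. McCormick's under-estimators are the tangent planes at
the corners `(l₁, l₂)` and `(u₁, u₂)`, and both factors have the same sign on the box, so they lie
below the product. Moreover `T_{a,b}` agrees with the product at the corner `(a, b)` and at its two
neighbours, so a convex function below the product is below `T_{a,b}` on the triangle spanned by
these three corners. The two triangles cover the box.
-/

open Set

section IsConvexEnvelope

variable (𝕜 : Type*) {E β : Type*} [Semiring 𝕜] [PartialOrder 𝕜] [AddCommMonoid E] [SMul 𝕜 E]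
  [AddCommMonoid β] [PartialOrder β] [SMul 𝕜 β]

/-- `g` is the convex envelope of `f` on `s`: the greatest function convex on `s` that minorizes `f`
on `s`. Functions are total, and only their values on `s` matter. -/
structure IsConvexEnvelope (s : Set E) (f g : E → β) : Prop where
  convexOn : ConvexOn 𝕜 s g
  le : ∀ x ∈ s, g x ≤ f x
  le_of_convexOn : ∀ h : E → β, ConvexOn 𝕜 s h → (∀ x ∈ s, h x ≤ f x) → ∀ x ∈ s, h x ≤ g x

end IsConvexEnvelope

section ConvexConcave

variable {𝕜 E β : Type*} [Semiring 𝕜] [PartialOrder 𝕜] [AddCommMonoid E] [Module 𝕜 E]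
  [AddCommGroup β] [PartialOrder β] [IsOrderedAddMonoid β] [Module 𝕜 β] [PosSMulMono 𝕜 β]
  {s t : Set E} {f g : E → β}

theorem convex_setOf_le_of_convexOn_of_concaveOn (hf : ConvexOn 𝕜 s f) (hg : ConcaveOn 𝕜 s g) :
    Convex 𝕜 {x ∈ s | f x ≤ g x} := by
  simpa only [Pi.sub_apply, sub_nonpos] using (hf.sub hg).convex_le 0

theorem le_on_convexHull_of_convexOn_of_concaveOn (hf : ConvexOn 𝕜 s f) (hg : ConcaveOn 𝕜 s g)
    (hts : t ⊆ s) (hfg : ∀ x ∈ t, f x ≤ g x) : ∀ x ∈ convexHull 𝕜 t, f x ≤ g x := by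
  have hsub : convexHull 𝕜 t ⊆ {x ∈ s | f x ≤ g x} :=
    convexHull_min (fun x hx => ⟨hts hx, hfg x hx⟩)
      (convex_setOf_le_of_convexOn_of_concaveOn hf hg)
  exact fun x hx => (hsub hx).2

end ConvexConcave

section Triangles

variable {𝕜 E F : Type*} [Field 𝕜] [LinearOrder 𝕜] [IsStrictOrderedRing 𝕜]
  [AddCommGroup E] [Module 𝕜 E] [AddCommGroup F] [Module 𝕜 F]

theorem combo_mem_convexHull_triple (x y z : E) {a b c : 𝕜} (ha : 0 ≤ a) (hb : 0 ≤ b) (hc : 0 ≤ c)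
    (habc : a + b + c = 1) : a • x + b • y + c • z ∈ convexHull 𝕜 {x, y, z} := by
  have hmem := (convex_convexHull 𝕜 {x, y, z}).sum_mem (t := Finset.univ) (w := ![a, b, c])
    (z := ![x, y, z]) (by simp [Fin.forall_fin_succ, ha, hb, hc])
    (by simpa [Fin.sum_univ_three] using habc)
    (fun i _ => subset_convexHull 𝕜 _ (by fin_cases i <;> simp))
  simpa [Fin.sum_univ_three] using hmem

theorem mk_combo_mem_convexHull_triple (x x' : E) (y y' : F) {a b c d : 𝕜} (hb : 0 ≤ b) (hd : 0 ≤ d)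
    (hab : a + b = 1) (hcd : c + d = 1) (hbd : b + d ≤ 1) :
    (a • x + b • x', c • y + d • y') ∈ convexHull 𝕜 {(x, y), (x', y), (x, y')} := by
  have hcombo : (a • x + b • x', c • y + d • y') =
      (1 - b - d) • (x, y) + b • (x', y) + d • (x, y') := by
    obtain rfl := eq_sub_of_add_eq hab
    obtain rfl := eq_sub_of_add_eq hcd
    ext <;> simp only [Prod.fst_add, Prod.snd_add, Prod.smul_fst, Prod.smul_snd] <;> module
  rw [hcombo]
  exact combo_mem_convexHull_triple _ _ _ (by linarith) hb hd (by ring)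

theorem segment_prod_segment_subset_union_convexHull (x x' : E) (y y' : F) :
    segment 𝕜 x x' ×ˢ segment 𝕜 y y' ⊆
      convexHull 𝕜 {(x, y), (x', y), (x, y')} ∪ convexHull 𝕜 {(x', y'), (x, y'), (x', y)} := by
  rintro ⟨_, _⟩ ⟨⟨a, b, ha, hb, hab, rfl⟩, ⟨c, d, hc, hd, hcd, rfl⟩⟩
  rcases le_total (b + d) 1 with hbd | hbd
  · exact .inl (mk_combo_mem_convexHull_triple x x' y y' hb hd hab hcd hbd)
  · right
    rw [add_comm (a • x), add_comm (c • y)]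
    exact mk_combo_mem_convexHull_triple x' x y' y ha hc (by linarith) (by linarith) (by linarith)

end Triangles

section MulTangent

/-- The tangent plane at `(a, b)` to the graph of `(x, y) ↦ x * y`, as a function of `p = (x, y)`.
McCormick's under-estimators are its instances at the lower and the upper corner of the box. -/
def mulTangent {R : Type*} [CommRing R] (a b : R) (p : R × R) : R :=
  b * p.1 + a * p.2 - a * b

theorem mul_sub_mulTangent {R : Type*} [CommRing R] (a b : R) (p : R × R) :
    p.1 * p.2 - mulTangent a b p = (p.1 - a) * (p.2 - b) := by
  rw [mulTangent]
  ring

section Ordered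

variable {R : Type*} [CommRing R] [PartialOrder R] [IsOrderedRing R] {s : Set (R × R)}

theorem mulTangent_le_mul {a b : R} {p : R × R} (hp : 0 ≤ (p.1 - a) * (p.2 - b)) :
    mulTangent a b p ≤ p.1 * p.2 :=
  sub_nonneg.1 (mul_sub_mulTangent a b p ▸ hp)

theorem mul_le_mulTangent {a b : R} {p : R × R} (hp : (p.1 - a) * (p.2 - b) ≤ 0) :
    p.1 * p.2 ≤ mulTangent a b p :=
  sub_nonpos.1 (mul_sub_mulTangent a b p ▸ hp)

theorem convexOn_mulTangent (hs : Convex R s) (a b : R) : ConvexOn R s (mulTangent a b) :=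
  ((b • LinearMap.fst R R R + a • LinearMap.snd R R R).convexOn hs).sub (concaveOn_const (a * b) hs)

theorem concaveOn_mulTangent (hs : Convex R s) (a b : R) : ConcaveOn R s (mulTangent a b) :=
  ((b • LinearMap.fst R R R + a • LinearMap.snd R R R).concaveOn hs).sub (convexOn_const (a * b) hs)

theorem le_mulTangent_on_convexHull {h : R × R → R} (hh : ConvexOn R s h)
    (hmul : ∀ p ∈ s, h p ≤ p.1 * p.2) {a a' b b' : R}
    (hs : {(a, b), (a', b), (a, b')} ⊆ s) :
    ∀ p ∈ convexHull R {(a, b), (a', b), (a, b')}, h p ≤ mulTangent a b p := by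
  refine le_on_convexHull_of_convexOn_of_concaveOn hh (concaveOn_mulTangent hh.1 a b) hs ?_
  intro p hp
  refine (hmul p (hs hp)).trans (mul_le_mulTangent ?_)
  rcases hp with rfl | rfl | rfl <;> simp

end Ordered

end MulTangent

theorem mccormick_convex_envelope_general {𝕜 : Type*} [Field 𝕜] [LinearOrder 𝕜]
    [IsStrictOrderedRing 𝕜] (l₁ u₁ l₂ u₂ : 𝕜) :
    IsConvexEnvelope 𝕜 (Icc l₁ u₁ ×ˢ Icc l₂ u₂) (fun p : 𝕜 × 𝕜 => p.1 * p.2)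
      (fun p => max (mulTangent u₁ u₂ p) (mulTangent l₁ l₂ p)) where
  convexOn :=
    have hbox := (convex_Icc l₁ u₁).prod (convex_Icc l₂ u₂)
    (convexOn_mulTangent hbox u₁ u₂).sup (convexOn_mulTangent hbox l₁ l₂)
  le := fun p ⟨⟨hl₁, hu₁⟩, hl₂, hu₂⟩ => max_le
    (mulTangent_le_mul (mul_nonneg_of_nonpos_of_nonpos (sub_nonpos.2 hu₁) (sub_nonpos.2 hu₂)))
    (mulTangent_le_mul (mul_nonneg (sub_nonneg.2 hl₁) (sub_nonneg.2 hl₂)))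
  le_of_convexOn h hh hmul p hp := by
    have h₁ : l₁ ≤ u₁ := hp.1.1.trans hp.1.2
    have h₂ : l₂ ≤ u₂ := hp.2.1.trans hp.2.2
    have htriangles := segment_prod_segment_subset_union_convexHull l₁ u₁ l₂ u₂
      (prod_mono Icc_subset_segment Icc_subset_segment hp)
    rcases htriangles with hlower | hupper
    · exact le_max_of_le_right
        (le_mulTangent_on_convexHull hh hmul (by simp [insert_subset_iff, h₁, h₂]) p hlower)
    · exact le_max_of_le_left
        (le_mulTangent_on_convexHull hh hmul (by simp [insert_subset_iff, h₁, h₂]) p hupper)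

/-- McCormick's convex envelope theorem for a bilinear term: the pointwise maximum of the
two under-estimators is the convex envelope of `(x₁, x₂) ↦ x₁ * x₂` on the box
`[l₁, u₁] × [l₂, u₂]`. -/
theorem mccormick_convex_envelope (l₁ u₁ l₂ u₂ : ℝ) (h₁ : l₁ ≤ u₁) (h₂ : l₂ ≤ u₂) :
    ConvexOn ℝ (Set.Icc l₁ u₁ ×ˢ Set.Icc l₂ u₂)
      (fun p : ℝ × ℝ =>
        max (u₂ * p.1 + u₁ * p.2 - u₁ * u₂) (l₂ * p.1 + l₁ * p.2 - l₁ * l₂)) ∧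
    (∀ p ∈ Set.Icc l₁ u₁ ×ˢ Set.Icc l₂ u₂,
      max (u₂ * p.1 + u₁ * p.2 - u₁ * u₂) (l₂ * p.1 + l₁ * p.2 - l₁ * l₂) ≤ p.1 * p.2) ∧
    (∀ h : ℝ × ℝ → ℝ, ConvexOn ℝ (Set.Icc l₁ u₁ ×ˢ Set.Icc l₂ u₂) h →
      (∀ p ∈ Set.Icc l₁ u₁ ×ˢ Set.Icc l₂ u₂, h p ≤ p.1 * p.2) →
      ∀ p ∈ Set.Icc l₁ u₁ ×ˢ Set.Icc l₂ u₂,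
        h p ≤ max (u₂ * p.1 + u₁ * p.2 - u₁ * u₂) (l₂ * p.1 + l₁ * p.2 - l₁ * l₂)) := by
  have ⟨hconvex, hle, hmax⟩ := mccormick_convex_envelope_general l₁ u₁ l₂ u₂
  exact ⟨hconvex, hle, hmax⟩
end

section
/- The McCormick relaxation defines the convex hull of a bilinear term: let ℓ₁ ≤ u₁ and ℓ₂ ≤ u₂ be real numbers. Then the polytope M = {(x₁,x₂,w) ∈ ℝ³ : ℓ₁ ≤ x₁ ≤ u₁, ℓ₂ ≤ x₂ ≤ u₂, w ≥ u₂x₁ + u₁x₂ − u₁u₂, w ≥ ℓ₂x₁ + ℓ₁x₂ − ℓ₁ℓ₂, w ≤ u₂x₁ + ℓ₁x₂ − ℓ₁u₂, w ≤ ℓ₂x₁ + u₁x₂ − u₁ℓ₂} equals the convex hull (over ℝ) of the set X = {(x₁,x₂,x₁·x₂) : ℓ₁ ≤ x₁ ≤ u₁, ℓ₂ ≤ x₂ ≤ u₂}. -/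
/-!
Expanding `(x₁ - a) * (x₂ - b)` and replacing `x₁ * x₂` by `w` gives an affine function of
`(x₁, x₂, w)`. The McCormick inequalities say that these affine functions, taken at the four corners
`(a, b)` of the box, have the signs that the products have over the box; hence they hold on the
graph, and on its convex hull. Conversely, the absolute values of the four functions are, up to the
common factor `(u₁ - l₁) * (u₂ - l₂)`, barycentric coordinates with respect to the points of the
graph above the opposite corners. If the box is degenerate, the inequalities force `w = x₁ * x₂`.
-/

/-- The McCormick relaxation of `w = x₁ * x₂` over the box `[l₁, u₁] × [l₂, u₂]`, as a set of
triples `(x₁, x₂, w)`. -/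
def mccormickRelaxation {R : Type*} [Ring R] [LE R] (l₁ u₁ l₂ u₂ : R) : Set (R × R × R) :=
  {p | l₁ ≤ p.1 ∧ p.1 ≤ u₁ ∧ l₂ ≤ p.2.1 ∧ p.2.1 ≤ u₂ ∧
    u₂ * p.1 + u₁ * p.2.1 - u₁ * u₂ ≤ p.2.2 ∧
    l₂ * p.1 + l₁ * p.2.1 - l₁ * l₂ ≤ p.2.2 ∧
    p.2.2 ≤ u₂ * p.1 + l₁ * p.2.1 - l₁ * u₂ ∧
    p.2.2 ≤ l₂ * p.1 + u₁ * p.2.1 - u₁ * l₂}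

/-- The graph of `(x₁, x₂) ↦ x₁ * x₂` over the box `[l₁, u₁] × [l₂, u₂]`, as a set of triples
`(x₁, x₂, x₁ * x₂)`. -/
def bilinearGraph {R : Type*} [Mul R] [LE R] (l₁ u₁ l₂ u₂ : R) : Set (R × R × R) :=
  {p | ∃ x₁ x₂ : R, l₁ ≤ x₁ ∧ x₁ ≤ u₁ ∧ l₂ ≤ x₂ ∧ x₂ ≤ u₂ ∧ p = (x₁, x₂, x₁ * x₂)}

/-- The points of the graph of `(x₁, x₂) ↦ x₁ * x₂` above the corners of the box
`[l₁, u₁] × [l₂, u₂]`. -/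
def graphVertex {R : Type*} [Mul R] (l₁ u₁ l₂ u₂ : R) : Fin 4 → R × R × R :=
  ![(l₁, l₂, l₁ * l₂), (l₁, u₂, l₁ * u₂), (u₁, l₂, u₁ * l₂), (u₁, u₂, u₁ * u₂)]

theorem graphVertex_mem_bilinearGraph {R : Type*} [Mul R] [Preorder R] {l₁ u₁ l₂ u₂ : R}
    (h₁ : l₁ ≤ u₁) (h₂ : l₂ ≤ u₂) (i : Fin 4) :
    graphVertex l₁ u₁ l₂ u₂ i ∈ bilinearGraph l₁ u₁ l₂ u₂ := by
  fin_cases i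
  · exact ⟨l₁, l₂, le_rfl, h₁, le_rfl, h₂, rfl⟩
  · exact ⟨l₁, u₂, le_rfl, h₁, h₂, le_rfl, rfl⟩
  · exact ⟨u₁, l₂, h₁, le_rfl, le_rfl, h₂, rfl⟩
  · exact ⟨u₁, u₂, h₁, le_rfl, h₂, le_rfl, rfl⟩

section CommRing

variable {R : Type*} [CommRing R]

/-- The linearization of `(x₁ - a) * (x₂ - b)` at the point `p = (x₁, x₂, w)`: the product is
expanded and `x₁ * x₂` is replaced by `w`. -/
def linearizedProduct (a b : R) (p : R × R × R) : R :=
  p.2.2 - (b * p.1 + a * p.2.1 - a * b)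

theorem linearizedProduct_eq_mul_add (a b : R) (p : R × R × R) :
    linearizedProduct a b p = (p.1 - a) * (p.2.1 - b) + (p.2.2 - p.1 * p.2.1) := by
  unfold linearizedProduct
  ring

theorem linearizedProduct_graph (a b x₁ x₂ : R) :
    linearizedProduct a b (x₁, x₂, x₁ * x₂) = (x₁ - a) * (x₂ - b) := by
  simp [linearizedProduct_eq_mul_add]

theorem isLinearMap_mul_add_mul_sub (a b : R) :
    IsLinearMap R fun p : R × R × R ↦ a * p.1 + b * p.2.1 - p.2.2 where
  map_add p q := by
    simp only [Prod.fst_add, Prod.snd_add]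
    ring
  map_smul t p := by
    simp only [Prod.smul_fst, Prod.smul_snd, smul_eq_mul]
    ring

/-- The barycentric coordinates of `p` with respect to `graphVertex l₁ u₁ l₂ u₂`, without the
normalizing factor `((u₁ - l₁) * (u₂ - l₂))⁻¹`. -/
def vertexWeight (l₁ u₁ l₂ u₂ : R) (p : R × R × R) : Fin 4 → R :=
  ![linearizedProduct u₁ u₂ p, -linearizedProduct u₁ l₂ p,
    -linearizedProduct l₁ u₂ p, linearizedProduct l₁ l₂ p]

theorem sum_vertexWeight (l₁ u₁ l₂ u₂ : R) (p : R × R × R) :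
    ∑ i, vertexWeight l₁ u₁ l₂ u₂ p i = (u₁ - l₁) * (u₂ - l₂) := by
  simp only [Fin.sum_univ_four, vertexWeight, linearizedProduct, Matrix.cons_val]
  ring

theorem sum_vertexWeight_smul_graphVertex (l₁ u₁ l₂ u₂ : R) (p : R × R × R) :
    ∑ i, vertexWeight l₁ u₁ l₂ u₂ p i • graphVertex l₁ u₁ l₂ u₂ i =
      ((u₁ - l₁) * (u₂ - l₂)) • p := by
  simp only [Fin.sum_univ_four, vertexWeight, graphVertex, linearizedProduct, Matrix.cons_val]
  ext <;> simp only [Prod.fst_add, Prod.snd_add, Prod.smul_fst, Prod.smul_snd, smul_eq_mul] <;> ring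

variable [PartialOrder R]

section IsOrderedAddMonoid

variable [IsOrderedAddMonoid R] {l₁ u₁ l₂ u₂ : R} {p : R × R × R}

theorem mem_mccormickRelaxation_iff :
    p ∈ mccormickRelaxation l₁ u₁ l₂ u₂ ↔
      l₁ ≤ p.1 ∧ p.1 ≤ u₁ ∧ l₂ ≤ p.2.1 ∧ p.2.1 ≤ u₂ ∧
        0 ≤ linearizedProduct u₁ u₂ p ∧ 0 ≤ linearizedProduct l₁ l₂ p ∧
        linearizedProduct l₁ u₂ p ≤ 0 ∧ linearizedProduct u₁ l₂ p ≤ 0 := by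
  simp only [mccormickRelaxation, linearizedProduct, Set.mem_ofPred_eq, sub_nonneg, sub_nonpos]

theorem vertexWeight_nonneg (hp : p ∈ mccormickRelaxation l₁ u₁ l₂ u₂) (i : Fin 4) :
    0 ≤ vertexWeight l₁ u₁ l₂ u₂ p i := by
  obtain ⟨-, -, -, -, huu, hll, hlu, hul⟩ := mem_mccormickRelaxation_iff.1 hp
  fin_cases i
  exacts [huu, neg_nonneg.2 hul, neg_nonneg.2 hlu, hll]

theorem mem_bilinearGraph_of_degenerate (hp : p ∈ mccormickRelaxation l₁ u₁ l₂ u₂)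
    (degenerate : l₁ = u₁ ∨ l₂ = u₂) : p ∈ bilinearGraph l₁ u₁ l₂ u₂ := by
  obtain ⟨hl₁, hu₁, hl₂, hu₂, -, hll, hlu, hul⟩ := mem_mccormickRelaxation_iff.1 hp
  refine ⟨p.1, p.2.1, hl₁, hu₁, hl₂, hu₂, Prod.ext rfl <| Prod.ext rfl <| sub_eq_zero.1 ?_⟩
  rw [linearizedProduct_eq_mul_add] at hll hlu hul
  rcases degenerate with rfl | rfl
  · rw [hu₁.antisymm hl₁, sub_self, zero_mul, zero_add] at hll hul
    simpa only [hu₁.antisymm hl₁] using hul.antisymm hll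
  · rw [hu₂.antisymm hl₂, sub_self, mul_zero, zero_add] at hll hlu
    simpa only [hu₂.antisymm hl₂] using hlu.antisymm hll

end IsOrderedAddMonoid

variable [IsOrderedRing R]

theorem bilinearGraph_subset_mccormickRelaxation {l₁ u₁ l₂ u₂ : R} :
    bilinearGraph l₁ u₁ l₂ u₂ ⊆ mccormickRelaxation l₁ u₁ l₂ u₂ := by
  rintro _ ⟨x₁, x₂, hl₁, hu₁, hl₂, hu₂, rfl⟩
  simp only [mem_mccormickRelaxation_iff, linearizedProduct_graph]
  exact ⟨hl₁, hu₁, hl₂, hu₂,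
    mul_nonneg_of_nonpos_of_nonpos (sub_nonpos.2 hu₁) (sub_nonpos.2 hu₂),
    mul_nonneg (sub_nonneg.2 hl₁) (sub_nonneg.2 hl₂),
    mul_nonpos_of_nonneg_of_nonpos (sub_nonneg.2 hl₁) (sub_nonpos.2 hu₂),
    mul_nonpos_of_nonpos_of_nonneg (sub_nonpos.2 hu₁) (sub_nonneg.2 hl₂)⟩

theorem convex_setOf_affine_le (a b c : R) :
    Convex R {p : R × R × R | a * p.1 + b * p.2.1 - c ≤ p.2.2} := by
  simpa only [sub_le_comm] using convex_halfSpace_le (isLinearMap_mul_add_mul_sub a b) c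

theorem convex_setOf_le_affine (a b c : R) :
    Convex R {p : R × R × R | p.2.2 ≤ a * p.1 + b * p.2.1 - c} := by
  simpa only [le_sub_comm] using convex_halfSpace_ge (isLinearMap_mul_add_mul_sub a b) c

theorem convex_mccormickRelaxation (l₁ u₁ l₂ u₂ : R) :
    Convex R (mccormickRelaxation l₁ u₁ l₂ u₂) := by
  have linear_x₁ : IsLinearMap R fun p : R × R × R ↦ p.1 := (LinearMap.fst R R (R × R)).isLinear
  have linear_x₂ : IsLinearMap R fun p : R × R × R ↦ p.2.1 :=
    (LinearMap.fst R R R ∘ₗ LinearMap.snd R R (R × R)).isLinear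
  exact (convex_halfSpace_ge linear_x₁ l₁).inter <| (convex_halfSpace_le linear_x₁ u₁).inter <|
    (convex_halfSpace_ge linear_x₂ l₂).inter <| (convex_halfSpace_le linear_x₂ u₂).inter <|
    (convex_setOf_affine_le u₂ u₁ (u₁ * u₂)).inter <|
    (convex_setOf_affine_le l₂ l₁ (l₁ * l₂)).inter <|
    (convex_setOf_le_affine u₂ l₁ (l₁ * u₂)).inter (convex_setOf_le_affine l₂ u₁ (u₁ * l₂))

end CommRing

section Field

variable {𝕜 : Type*} [Field 𝕜] {l₁ u₁ l₂ u₂ : 𝕜}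

theorem centerMass_vertexWeight_graphVertex (h₁ : l₁ ≠ u₁) (h₂ : l₂ ≠ u₂) (p : 𝕜 × 𝕜 × 𝕜) :
    Finset.univ.centerMass (vertexWeight l₁ u₁ l₂ u₂ p) (graphVertex l₁ u₁ l₂ u₂) = p := by
  rw [Finset.centerMass, sum_vertexWeight, sum_vertexWeight_smul_graphVertex,
    inv_smul_smul₀ (mul_ne_zero (sub_ne_zero.2 h₁.symm) (sub_ne_zero.2 h₂.symm))]

variable [LinearOrder 𝕜] [IsStrictOrderedRing 𝕜]

theorem mccormickRelaxation_subset_convexHull_graphVertex (h₁ : l₁ < u₁) (h₂ : l₂ < u₂) :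
    mccormickRelaxation l₁ u₁ l₂ u₂ ⊆ convexHull 𝕜 (Set.range (graphVertex l₁ u₁ l₂ u₂)) := by
  intro p hp
  rw [← centerMass_vertexWeight_graphVertex h₁.ne h₂.ne p]
  refine Finset.centerMass_mem_convexHull _ (fun i _ ↦ vertexWeight_nonneg hp i) ?_
    fun i _ ↦ Set.mem_range_self i
  rw [sum_vertexWeight]
  exact mul_pos (sub_pos.2 h₁) (sub_pos.2 h₂)

theorem mccormickRelaxation_subset_convexHull_bilinearGraph :
    mccormickRelaxation l₁ u₁ l₂ u₂ ⊆ convexHull 𝕜 (bilinearGraph l₁ u₁ l₂ u₂) := by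
  intro p hp
  have h₁ : l₁ ≤ u₁ := hp.1.trans hp.2.1
  have h₂ : l₂ ≤ u₂ := hp.2.2.1.trans hp.2.2.2.1
  by_cases degenerate : l₁ = u₁ ∨ l₂ = u₂
  · exact subset_convexHull 𝕜 _ (mem_bilinearGraph_of_degenerate hp degenerate)
  · obtain ⟨hne₁, hne₂⟩ := not_or.1 degenerate
    exact convexHull_mono (Set.range_subset_iff.2 (graphVertex_mem_bilinearGraph h₁ h₂))
      (mccormickRelaxation_subset_convexHull_graphVertex (h₁.lt_of_ne hne₁) (h₂.lt_of_ne hne₂) hp)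

theorem mccormick_eq_convexHull_graph_general (l₁ u₁ l₂ u₂ : 𝕜) :
    mccormickRelaxation l₁ u₁ l₂ u₂ = convexHull 𝕜 (bilinearGraph l₁ u₁ l₂ u₂) :=
  mccormickRelaxation_subset_convexHull_bilinearGraph.antisymm <|
    convexHull_min bilinearGraph_subset_mccormickRelaxation (convex_mccormickRelaxation l₁ u₁ l₂ u₂)

end Field

/-- The McCormick relaxation polytope equals the convex hull of the graph of a bilinear
term over the box `[l₁, u₁] × [l₂, u₂]`. -/
theorem mccormick_eq_convexHull_graph (l₁ u₁ l₂ u₂ : ℝ) (h₁ : l₁ ≤ u₁) (h₂ : l₂ ≤ u₂) :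
    {p : ℝ × ℝ × ℝ | l₁ ≤ p.1 ∧ p.1 ≤ u₁ ∧ l₂ ≤ p.2.1 ∧ p.2.1 ≤ u₂ ∧
      u₂ * p.1 + u₁ * p.2.1 - u₁ * u₂ ≤ p.2.2 ∧
      l₂ * p.1 + l₁ * p.2.1 - l₁ * l₂ ≤ p.2.2 ∧
      p.2.2 ≤ u₂ * p.1 + l₁ * p.2.1 - l₁ * u₂ ∧
      p.2.2 ≤ l₂ * p.1 + u₁ * p.2.1 - u₁ * l₂} =
    convexHull ℝ {p : ℝ × ℝ × ℝ | ∃ x₁ x₂ : ℝ,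
      l₁ ≤ x₁ ∧ x₁ ≤ u₁ ∧ l₂ ≤ x₂ ∧ x₂ ≤ u₂ ∧ p = (x₁, x₂, x₁ * x₂)} :=
  mccormick_eq_convexHull_graph_general l₁ u₁ l₂ u₂
end

section
/- Equivalence of the McCormick formulation and the vertex (lambda) formulation for a bilinear term with a single partition: let ℓ₁ ≤ u₁ and ℓ₂ ≤ u₂ be real numbers. Then the polytope M = {(x₁,x₂,w) ∈ ℝ³ : ℓ₁ ≤ x₁ ≤ u₁, ℓ₂ ≤ x₂ ≤ u₂, w ≥ u₂x₁ + u₁x₂ − u₁u₂, w ≥ ℓ₂x₁ + ℓ₁x₂ − ℓ₁ℓ₂, w ≤ u₂x₁ + ℓ₁x₂ − ℓ₁u₂, w ≤ ℓ₂x₁ + u₁x₂ − u₁ℓ₂} equals the convex hull (over ℝ) of the four lifted corner points {(ℓ₁,ℓ₂,ℓ₁ℓ₂), (ℓ₁,u₂,ℓ₁u₂), (u₁,ℓ₂,u₁ℓ₂), (u₁,u₂,u₁u₂)}. -/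
/-!
Each of the four McCormick inequalities says that one of the products `(x₁ - l₁) * (x₂ - l₂)`,
`(x₁ - l₁) * (u₂ - x₂)`, `(u₁ - x₁) * (x₂ - l₂)`, `(u₁ - x₁) * (u₂ - x₂)` stays nonnegative once
`x₁ * x₂` is replaced by `w`. Divided by the area of the box, these four numbers are the weights of
the lifted corners. To avoid dividing by zero for a degenerate box, write
`x₁ = l₁ + (u₁ - l₁) * s`, `x₂ = l₂ + (u₂ - l₂) * t` with `s, t ∈ [0, 1]`, and let `r` play the role
of the product `s * t`: the weights are then `1 - s - t + r`, `t - r`, `s - r` and `r`.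
-/

open Set

lemma convex_setOf_affineMap_le {𝕜 E : Type*} [CommRing 𝕜] [PartialOrder 𝕜] [IsOrderedRing 𝕜]
    [AddCommGroup E] [Module 𝕜 E] (f g : E →ᵃ[𝕜] 𝕜) : Convex 𝕜 {x | f x ≤ g x} := by
  simpa [preimage] using (convex_Ici (0 : 𝕜)).affine_preimage (g - f)

lemma combination_four_mem_convexHull {𝕜 E : Type*} [Field 𝕜] [LinearOrder 𝕜]
    [IsStrictOrderedRing 𝕜] [AddCommGroup E] [Module 𝕜 E] {p q r s : E} {a b c d : 𝕜}
    (ha : 0 ≤ a) (hb : 0 ≤ b) (hc : 0 ≤ c) (hd : 0 ≤ d) (habcd : a + b + c + d = 1) :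
    a • p + b • q + c • r + d • s ∈ convexHull 𝕜 {p, q, r, s} := by
  have h := (convex_convexHull 𝕜 {p, q, r, s}).sum_mem (t := Finset.univ)
    (w := ![a, b, c, d]) (z := ![p, q, r, s])
    (by simp [Fin.forall_fin_succ, ha, hb, hc, hd])
    (by simpa [Fin.sum_univ_four] using habcd)
    (fun i _ ↦ subset_convexHull 𝕜 _ (by fin_cases i <;> simp))
  simpa [Fin.sum_univ_four] using h

/-- The McCormick relaxation of `w = x₁ * x₂` over the box `[l₁, u₁] × [l₂, u₂]`, as a set of
triples `(x₁, x₂, w)`: the box constraints, the two under-estimators and the two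
over-estimators. -/
def mccormickPolytope {𝕜 : Type*} [Ring 𝕜] [LE 𝕜] (l₁ u₁ l₂ u₂ : 𝕜) : Set (𝕜 × 𝕜 × 𝕜) :=
  {p | l₁ ≤ p.1 ∧ p.1 ≤ u₁ ∧ l₂ ≤ p.2.1 ∧ p.2.1 ≤ u₂ ∧
    u₂ * p.1 + u₁ * p.2.1 - u₁ * u₂ ≤ p.2.2 ∧
    l₂ * p.1 + l₁ * p.2.1 - l₁ * l₂ ≤ p.2.2 ∧
    p.2.2 ≤ u₂ * p.1 + l₁ * p.2.1 - l₁ * u₂ ∧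
    p.2.2 ≤ l₂ * p.1 + u₁ * p.2.1 - u₁ * l₂}

/-- The points `(a₁, a₂, a₁ * a₂)` of the graph of multiplication over the corners `(a₁, a₂)` of
the box `[l₁, u₁] × [l₂, u₂]`; they need not be distinct. -/
def liftedCorners {𝕜 : Type*} [Mul 𝕜] (l₁ u₁ l₂ u₂ : 𝕜) : Set (𝕜 × 𝕜 × 𝕜) :=
  {(l₁, l₂, l₁ * l₂), (l₁, u₂, l₁ * u₂), (u₁, l₂, u₁ * l₂), (u₁, u₂, u₁ * u₂)}

section OrderedRing

variable {𝕜 : Type*} [CommRing 𝕜]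

lemma convex_mccormickPolytope [PartialOrder 𝕜] [IsOrderedRing 𝕜] (l₁ u₁ l₂ u₂ : 𝕜) :
    Convex 𝕜 (mccormickPolytope l₁ u₁ l₂ u₂) := by
  let x₁ : 𝕜 × 𝕜 × 𝕜 →ᵃ[𝕜] 𝕜 := AffineMap.fst
  let x₂ : 𝕜 × 𝕜 × 𝕜 →ᵃ[𝕜] 𝕜 := AffineMap.fst.comp AffineMap.snd
  let w : 𝕜 × 𝕜 × 𝕜 →ᵃ[𝕜] 𝕜 := AffineMap.snd.comp AffineMap.snd
  let const (c : 𝕜) : 𝕜 × 𝕜 × 𝕜 →ᵃ[𝕜] 𝕜 := AffineMap.const 𝕜 _ c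
  exact (convex_setOf_affineMap_le (const l₁) x₁).inter <|
    (convex_setOf_affineMap_le x₁ (const u₁)).inter <|
    (convex_setOf_affineMap_le (const l₂) x₂).inter <|
    (convex_setOf_affineMap_le x₂ (const u₂)).inter <|
    (convex_setOf_affineMap_le (u₂ • x₁ + u₁ • x₂ - const (u₁ * u₂)) w).inter <|
    (convex_setOf_affineMap_le (l₂ • x₁ + l₁ • x₂ - const (l₁ * l₂)) w).inter <|
    (convex_setOf_affineMap_le w (u₂ • x₁ + l₁ • x₂ - const (l₁ * u₂))).inter <|
    convex_setOf_affineMap_le w (l₂ • x₁ + u₁ • x₂ - const (u₁ * l₂))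

lemma liftedCorners_subset_mccormickPolytope [LinearOrder 𝕜] [IsStrictOrderedRing 𝕜]
    {l₁ u₁ l₂ u₂ : 𝕜} (h₁ : l₁ ≤ u₁) (h₂ : l₂ ≤ u₂) :
    liftedCorners l₁ u₁ l₂ u₂ ⊆ mccormickPolytope l₁ u₁ l₂ u₂ := by
  have area_nonneg : 0 ≤ (u₁ - l₁) * (u₂ - l₂) :=
    mul_nonneg (sub_nonneg.2 h₁) (sub_nonneg.2 h₂)
  rintro _ (rfl | rfl | rfl | rfl) <;>
    refine ⟨?_, ?_, ?_, ?_, ?_, ?_, ?_, ?_⟩ <;> linarith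

end OrderedRing

section OrderedField

variable {𝕜 : Type*} [Field 𝕜] [LinearOrder 𝕜] [IsStrictOrderedRing 𝕜] {l₁ u₁ l₂ u₂ : 𝕜}

lemma exists_eq_add_mul_of_mem_Icc {l u x : 𝕜} (hx : x ∈ Icc l u) :
    ∃ s ∈ Icc (0 : 𝕜) 1, x = l + (u - l) * s := by
  have h : x - l ∈ ((u - l) * ·) '' Icc 0 1 := by
    rw [image_mul_left_Icc (sub_nonneg.2 (hx.1.trans hx.2)) zero_le_one]
    simpa using hx
  obtain ⟨s, hs, hsx⟩ := h
  exact ⟨s, hs, eq_add_of_sub_eq' hsx.symm⟩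

lemma exists_unit_coordinates_of_mem_mccormickPolytope {x₁ x₂ w : 𝕜}
    (h : (x₁, x₂, w) ∈ mccormickPolytope l₁ u₁ l₂ u₂) :
    ∃ s t r : 𝕜, r ∈ Icc (max 0 (s + t - 1)) (min s t) ∧
      x₁ = l₁ + (u₁ - l₁) * s ∧ x₂ = l₂ + (u₂ - l₂) * t ∧
      w = l₂ * x₁ + l₁ * x₂ - l₁ * l₂ + (u₁ - l₁) * (u₂ - l₂) * r := by
  obtain ⟨hl₁, hu₁, hl₂, hu₂, under_u, under_l, over_lu, over_ul⟩ := h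
  dsimp only at hl₁ hu₁ hl₂ hu₂ under_u under_l over_lu over_ul
  obtain ⟨s, ⟨hs₀, hs₁⟩, hx₁⟩ := exists_eq_add_mul_of_mem_Icc ⟨hl₁, hu₁⟩
  obtain ⟨t, ⟨ht₀, ht₁⟩, hx₂⟩ := exists_eq_add_mul_of_mem_Icc ⟨hl₂, hu₂⟩
  have area_nonneg : 0 ≤ (u₁ - l₁) * (u₂ - l₂) :=
    mul_nonneg (sub_nonneg.2 (hl₁.trans hu₁)) (sub_nonneg.2 (hl₂.trans hu₂))
  have unit_range : max 0 (s + t - 1) ≤ min s t :=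
    max_le (le_min hs₀ ht₀) (le_min (by linarith) (by linarith))
  have hw : w - (l₂ * x₁ + l₁ * x₂ - l₁ * l₂) ∈
      ((u₁ - l₁) * (u₂ - l₂) * ·) '' Icc (max 0 (s + t - 1)) (min s t) := by
    rw [image_mul_left_Icc area_nonneg unit_range, mul_max_of_nonneg _ _ area_nonneg,
      mul_min_of_nonneg _ _ area_nonneg]
    subst hx₁ hx₂
    exact ⟨max_le (by linarith) (by linarith), le_min (by linarith) (by linarith)⟩
  obtain ⟨r, hr, hrw⟩ := hw
  exact ⟨s, t, r, hr, hx₁, hx₂, eq_add_of_sub_eq' hrw.symm⟩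

lemma mccormickPolytope_subset_convexHull_liftedCorners :
    mccormickPolytope l₁ u₁ l₂ u₂ ⊆ convexHull 𝕜 (liftedCorners l₁ u₁ l₂ u₂) := by
  rintro ⟨x₁, x₂, w⟩ h
  obtain ⟨s, t, r, ⟨hr_lower, hr_upper⟩, rfl, rfl, rfl⟩ :=
    exists_unit_coordinates_of_mem_mccormickPolytope h
  obtain ⟨hr₀, hr₁⟩ := max_le_iff.1 hr_lower
  obtain ⟨hrs, hrt⟩ := le_min_iff.1 hr_upper
  have hull_mem : (1 - s - t + r) • (l₁, l₂, l₁ * l₂) + (t - r) • (l₁, u₂, l₁ * u₂) +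
      (s - r) • (u₁, l₂, u₁ * l₂) + r • (u₁, u₂, u₁ * u₂) ∈
      convexHull 𝕜 (liftedCorners l₁ u₁ l₂ u₂) :=
    combination_four_mem_convexHull (by linarith) (sub_nonneg.2 hrt) (sub_nonneg.2 hrs) hr₀
      (by ring)
  convert hull_mem using 1
  simp only [Prod.smul_mk, Prod.mk_add_mk, smul_eq_mul, Prod.mk.injEq]
  refine ⟨?_, ?_, ?_⟩ <;> ring

theorem mccormick_eq_convexHull_corners_general (h₁ : l₁ ≤ u₁) (h₂ : l₂ ≤ u₂) :
    mccormickPolytope l₁ u₁ l₂ u₂ = convexHull 𝕜 (liftedCorners l₁ u₁ l₂ u₂) :=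
  mccormickPolytope_subset_convexHull_liftedCorners.antisymm <|
    convexHull_min (liftedCorners_subset_mccormickPolytope h₁ h₂)
      (convex_mccormickPolytope l₁ u₁ l₂ u₂)

end OrderedField

/-- The McCormick relaxation polytope equals the convex hull of the four lifted corner
points of the box `[l₁, u₁] × [l₂, u₂]` (vertex / lambda formulation). -/
theorem mccormick_eq_convexHull_corners (l₁ u₁ l₂ u₂ : ℝ) (h₁ : l₁ ≤ u₁) (h₂ : l₂ ≤ u₂) :
    {p : ℝ × ℝ × ℝ | l₁ ≤ p.1 ∧ p.1 ≤ u₁ ∧ l₂ ≤ p.2.1 ∧ p.2.1 ≤ u₂ ∧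
      u₂ * p.1 + u₁ * p.2.1 - u₁ * u₂ ≤ p.2.2 ∧
      l₂ * p.1 + l₁ * p.2.1 - l₁ * l₂ ≤ p.2.2 ∧
      p.2.2 ≤ u₂ * p.1 + l₁ * p.2.1 - l₁ * u₂ ∧
      p.2.2 ≤ l₂ * p.1 + u₁ * p.2.1 - u₁ * l₂} =
    convexHull ℝ ({(l₁, l₂, l₁ * l₂), (l₁, u₂, l₁ * u₂),
      (u₁, l₂, u₁ * l₂), (u₁, u₂, u₁ * u₂)} : Set (ℝ × ℝ × ℝ)) :=
  mccormick_eq_convexHull_corners_general h₁ h₂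
end

section
/- Vertex characterization of the convex hull of the graph of a multilinear term (Rikun): let n ≥ 1, let ℓ, u : Fin n → ℝ with ℓ i ≤ u i for all i, and let φ(x) = ∏ᵢ xᵢ. Then the convex hull (over ℝ) of the set X = {(x, φ(x)) ∈ ℝⁿ × ℝ : ℓ i ≤ x i ≤ u i for all i} equals the convex hull of the finite set of lifted vertices {(v, φ(v)) : v ∈ ℝⁿ, v i ∈ {ℓ i, u i} for all i}. -/
/-!
The lifting `x ↦ (x, ∏ i, x i)` is affine in each coordinate separately. Hence, when all coordinates
but one are frozen, the set of values of the remaining coordinate whose lifted point lies in a given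
convex set is itself convex, so it contains `[l i, u i]` as soon as it contains `l i` and `u i`.
Applied to the convex hull of the lifted vertices, this frees the coordinates one at a time.
-/

open Function Set

theorem graphOn_eq_setOf {α β : Type*} (f : α → β) (s : Set α) :
    s.graphOn f = {p | ∃ x, x ∈ s ∧ p = (x, f x)} := by
  ext p
  simp only [graphOn, mem_image, mem_ofPred_eq, eq_comm]

section Multiaffine

variable {𝕜 ι F G : Type*} {E : ι → Type*} [DecidableEq ι] [Ring 𝕜]
  [∀ i, AddCommGroup (E i)] [∀ i, Module 𝕜 (E i)]
  [AddCommGroup F] [Module 𝕜 F] [AddCommGroup G] [Module 𝕜 G]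

variable (𝕜) in
/-- A function of several vector variables is multiaffine if it is affine in each variable when all
the others are held fixed. Unlike multilinearity, this property passes from `f` to the graph map
`x ↦ (x, f x)`. As for `MultilinearMap`, the `i`-th variable is varied by `Function.update`. -/
def IsMultiaffine (f : (∀ i, E i) → F) : Prop :=
  ∀ x i, ∃ g : E i →ᵃ[𝕜] F, ∀ t, f (update x i t) = g t

theorem isMultiaffine_id : IsMultiaffine 𝕜 (id : (∀ i, E i) → ∀ i, E i) := fun x i ↦ by
  refine ⟨(LinearMap.single 𝕜 E i).toAffineMap + AffineMap.const 𝕜 (E i) (update x i 0),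
    fun t ↦ ?_⟩
  simp [Pi.single, ← update_add]

theorem isMultiaffine_multilinearMap (f : MultilinearMap 𝕜 E F) : IsMultiaffine 𝕜 f := fun x i ↦
  ⟨(f.toLinearMap x i).toAffineMap, fun _ ↦ rfl⟩

namespace IsMultiaffine

theorem prodMk {f : (∀ i, E i) → F} {g : (∀ i, E i) → G} (hf : IsMultiaffine 𝕜 f)
    (hg : IsMultiaffine 𝕜 g) : IsMultiaffine 𝕜 fun x ↦ (f x, g x) := fun x i ↦ by
  obtain ⟨f', hf'⟩ := hf x i
  obtain ⟨g', hg'⟩ := hg x i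
  exact ⟨f'.prod g', fun t ↦ Prod.ext (hf' t) (hg' t)⟩

variable [PartialOrder 𝕜]

theorem convex_preimage_update {f : (∀ i, E i) → F} (hf : IsMultiaffine 𝕜 f) {C : Set F}
    (hC : Convex 𝕜 C) (x : ∀ i, E i) (i : ι) : Convex 𝕜 (update x i ⁻¹' (f ⁻¹' C)) := by
  obtain ⟨g, hg⟩ := hf x i
  have preimage_eq : update x i ⁻¹' (f ⁻¹' C) = g ⁻¹' C := by
    ext t
    simp only [mem_preimage, hg]
  exact preimage_eq ▸ hC.affine_preimage g

end IsMultiaffine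

end Multiaffine

section ConvexHull

variable {𝕜 ι F : Type*} {E : ι → Type*} [DecidableEq ι] [Finite ι]

theorem pi_convexHull_subset_of_convex_preimage_update [Semiring 𝕜] [PartialOrder 𝕜]
    [∀ i, AddCommMonoid (E i)] [∀ i, Module 𝕜 (E i)] {S : ∀ i, Set (E i)} {D : Set (∀ i, E i)}
    (hD : ∀ x i, Convex 𝕜 (update x i ⁻¹' D)) (hSD : univ.pi S ⊆ D) :
    (univ.pi fun i ↦ convexHull 𝕜 (S i)) ⊆ D := by
  have := Fintype.ofFinite ι
  suffices free : ∀ s : Finset ι, ∀ x : ∀ i, E i, (∀ i ∈ s, x i ∈ convexHull 𝕜 (S i)) →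
      (∀ i ∉ s, x i ∈ S i) → x ∈ D from
    fun x hx ↦ free Finset.univ x (fun i _ ↦ hx i trivial) (by simp)
  intro s
  induction s using Finset.induction_on with
  | empty => exact fun x _ hx ↦ hSD fun i _ ↦ hx i (Finset.notMem_empty i)
  | insert a s ha ih =>
    intro x hs hsc
    have section_subset : S a ⊆ update x a ⁻¹' D := by
      refine fun t ht ↦ ih (update x a t) (fun i hi ↦ ?_) fun i hi ↦ ?_
      · rw [update_of_ne (ne_of_mem_of_not_mem hi ha)]
        exact hs i (Finset.mem_insert_of_mem hi)
      · obtain rfl | hia := eq_or_ne i a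
        · rwa [update_self]
        · rw [update_of_ne hia]
          exact hsc i (by simp [hi, hia])
    have := convexHull_min section_subset (hD x a) (hs a (Finset.mem_insert_self a s))
    rwa [mem_preimage, update_eq_self] at this

variable [Ring 𝕜] [PartialOrder 𝕜] [∀ i, AddCommGroup (E i)] [∀ i, Module 𝕜 (E i)]
  [AddCommGroup F] [Module 𝕜 F] {f : (∀ i, E i) → F}

theorem IsMultiaffine.convexHull_image_pi_convexHull (hf : IsMultiaffine 𝕜 f)
    (S : ∀ i, Set (E i)) :
    convexHull 𝕜 (f '' univ.pi fun i ↦ convexHull 𝕜 (S i)) = convexHull 𝕜 (f '' univ.pi S) := by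
  apply Subset.antisymm
  · refine convexHull_min (image_subset_iff.mpr ?_) (convex_convexHull 𝕜 _)
    exact pi_convexHull_subset_of_convex_preimage_update
      (hf.convex_preimage_update (convex_convexHull 𝕜 _))
      (image_subset_iff.mp (subset_convexHull 𝕜 _))
  · gcongr with i
    exact subset_convexHull 𝕜 (S i)

theorem convexHull_multilinear_graph_eq_convexHull_vertices_general (hf : IsMultiaffine 𝕜 f)
    (S : ∀ i, Set (E i)) :
    convexHull 𝕜 ((univ.pi fun i ↦ convexHull 𝕜 (S i)).graphOn f) =
      convexHull 𝕜 ((univ.pi S).graphOn f) :=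
  (isMultiaffine_id.prodMk hf).convexHull_image_pi_convexHull S

end ConvexHull

/-- Rikun's theorem: the convex hull of the graph of a multilinear term `φ(x) = ∏ i, x i`
over the box `[ℓ, u]` equals the convex hull of the finite set of lifted vertices of the
box. -/
theorem convexHull_multilinear_graph_eq_convexHull_vertices
    (n : ℕ) (hn : 1 ≤ n) (l u : Fin n → ℝ) (hlu : ∀ i, l i ≤ u i) :
    convexHull ℝ {p : (Fin n → ℝ) × ℝ |
        ∃ x : Fin n → ℝ, (∀ i, l i ≤ x i ∧ x i ≤ u i) ∧ p = (x, ∏ i, x i)} =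
    convexHull ℝ {p : (Fin n → ℝ) × ℝ |
        ∃ v : Fin n → ℝ, (∀ i, v i = l i ∨ v i = u i) ∧ p = (v, ∏ i, v i)} := by
  simpa only [graphOn_eq_setOf, mem_univ_pi, convexHull_pair, segment_eq_Icc (hlu _),
    mem_Icc, mem_insert_iff, mem_singleton_iff, MultilinearMap.mkPiAlgebra_apply] using
    convexHull_multilinear_graph_eq_convexHull_vertices_general
      (isMultiaffine_multilinearMap (MultilinearMap.mkPiAlgebra ℝ (Fin n) ℝ)) fun i ↦ {l i, u i}
end

section
/- A multilinear term attains its extreme values over a box at vertices: let n ≥ 1, let ℓ, u : Fin n → ℝ with ℓ i ≤ u i for all i, and let φ(x) = ∏ᵢ xᵢ. Then for every x ∈ ℝⁿ with ℓ i ≤ x i ≤ u i for all i, there exist points v and v' with v i, v' i ∈ {ℓ i, u i} for all i such that φ(v) ≤ φ(x) ≤ φ(v'). -/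
/-!
With all but one coordinate fixed, a multilinear term is monotone or antitone in the remaining one,
so moving that coordinate to one of the endpoints of its interval does not increase the value.
Doing this for one coordinate after another reaches a vertex. Reversing the order on the values
gives the upper bound.
-/

open Function

section CoordinatewiseMonotone

variable {ι : Type*} [DecidableEq ι] {α : ι → Type*} [∀ i, Preorder (α i)]
  {β : Type*} [Preorder β] {f : (∀ i, α i) → β} {l u x : ∀ i, α i}

theorem exists_update_endpoint_le {i : ι}
    (hf : Monotone (fun t ↦ f (update x i t)) ∨ Antitone (fun t ↦ f (update x i t)))
    (hl : l i ≤ x i) (hu : x i ≤ u i) :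
    ∃ t, (t = l i ∨ t = u i) ∧ f (update x i t) ≤ f x := by
  rcases hf with hmono | hanti
  · exact ⟨l i, .inl rfl, by simpa only [update_eq_self] using hmono hl⟩
  · exact ⟨u i, .inr rfl, by simpa only [update_eq_self] using hanti hu⟩

theorem exists_endpoints_on_finset_le
    (hf : ∀ y i, Monotone (fun t ↦ f (update y i t)) ∨ Antitone (fun t ↦ f (update y i t)))
    (hx : x ∈ Set.Icc l u) (s : Finset ι) :
    ∃ v, (∀ i ∈ s, v i = l i ∨ v i = u i) ∧ (∀ i ∉ s, v i = x i) ∧ f v ≤ f x := by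
  induction s using Finset.induction_on with
  | empty => exact ⟨x, by simp, fun _ _ ↦ rfl, le_rfl⟩
  | insert i s hi ih =>
    obtain ⟨v, hv_endpoint, hv_eq, hv_le⟩ := ih
    obtain ⟨t, ht, ht_le⟩ := exists_update_endpoint_le (hf v i)
      ((hx.1 i).trans_eq (hv_eq i hi).symm) ((hv_eq i hi).trans_le (hx.2 i))
    refine ⟨update v i t, fun j hj ↦ ?_, fun j hj ↦ ?_, ht_le.trans hv_le⟩
    · obtain rfl | hji := eq_or_ne j i
      · simpa only [update_self] using ht
      · simpa only [update_of_ne hji] using hv_endpoint j (Finset.mem_of_mem_insert_of_ne hj hji)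
    · obtain ⟨hji, hjs⟩ : j ≠ i ∧ j ∉ s := by simpa only [Finset.mem_insert, not_or] using hj
      rw [update_of_ne hji, hv_eq j hjs]

theorem exists_vertex_le [Finite ι]
    (hf : ∀ y i, Monotone (fun t ↦ f (update y i t)) ∨ Antitone (fun t ↦ f (update y i t)))
    (hx : x ∈ Set.Icc l u) :
    ∃ v, (∀ i, v i = l i ∨ v i = u i) ∧ f v ≤ f x := by
  cases nonempty_fintype ι
  obtain ⟨v, hv, -, hv_le⟩ := exists_endpoints_on_finset_le hf hx Finset.univ
  exact ⟨v, fun i ↦ hv i (Finset.mem_univ i), hv_le⟩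

theorem exists_le_vertex [Finite ι]
    (hf : ∀ y i, Monotone (fun t ↦ f (update y i t)) ∨ Antitone (fun t ↦ f (update y i t)))
    (hx : x ∈ Set.Icc l u) :
    ∃ v, (∀ i, v i = l i ∨ v i = u i) ∧ f x ≤ f v :=
  exists_vertex_le (f := OrderDual.toDual ∘ f)
    (fun y i ↦ (hf y i).symm.imp Antitone.dual_right Monotone.dual_right) hx

end CoordinatewiseMonotone

section Multilinear

variable {ι R M : Type*} [Semiring R] [Preorder R] [AddCommGroup M] [LinearOrder M]
  [IsOrderedAddMonoid M] [Module R M] [SMulPosMono R M]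

theorem monotone_or_antitone_smul_right (m : M) :
    Monotone (fun t : R ↦ t • m) ∨ Antitone (fun t : R ↦ t • m) := by
  rcases le_total 0 m with hm | hm
  · exact .inl (monotone_smul_right_of_nonneg hm)
  · have hanti : Antitone (fun t : R ↦ -(t • -m)) :=
      (monotone_smul_right_of_nonneg (neg_nonneg.mpr hm)).neg
    exact .inr (by simpa only [smul_neg, neg_neg] using hanti)

theorem multilinearMap_monotone_or_antitone_update [DecidableEq ι]
    (f : MultilinearMap R (fun _ : ι ↦ R) M) (x : ι → R) (i : ι) :
    Monotone (fun t ↦ f (update x i t)) ∨ Antitone (fun t ↦ f (update x i t)) := by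
  have update_eq_smul : (fun t ↦ f (update x i t)) = fun t ↦ t • f (update x i 1) := by
    funext t
    rw [← f.map_update_smul, smul_eq_mul, mul_one]
  rw [update_eq_smul]
  exact monotone_or_antitone_smul_right (f (update x i 1))

theorem multilinear_extremes_at_vertices_general [Finite ι]
    (f : MultilinearMap R (fun _ : ι ↦ R) M) {l u x : ι → R} (hx : x ∈ Set.Icc l u) :
    ∃ v v' : ι → R,
      (∀ i, v i = l i ∨ v i = u i) ∧ (∀ i, v' i = l i ∨ v' i = u i) ∧ f v ≤ f x ∧ f x ≤ f v' := by
  classical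
  have hf := multilinearMap_monotone_or_antitone_update f
  obtain ⟨v, hv, hv_le⟩ := exists_vertex_le hf hx
  obtain ⟨v', hv', hv'_ge⟩ := exists_le_vertex hf hx
  exact ⟨v, v', hv, hv', hv_le, hv'_ge⟩

end Multilinear

/-- A multilinear term attains its extreme values over a box at vertices of the box. -/
theorem multilinear_extremes_at_vertices
    (n : ℕ) (hn : 1 ≤ n) (l u : Fin n → ℝ) (hlu : ∀ i, l i ≤ u i)
    (x : Fin n → ℝ) (hx : ∀ i, l i ≤ x i ∧ x i ≤ u i) :
    ∃ v v' : Fin n → ℝ,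
      (∀ i, v i = l i ∨ v i = u i) ∧ (∀ i, v' i = l i ∨ v' i = u i) ∧
      (∏ i, v i) ≤ (∏ i, x i) ∧ (∏ i, x i) ≤ (∏ i, v' i) := by
  simpa only [MultilinearMap.mkPiAlgebra_apply] using multilinear_extremes_at_vertices_general
    (MultilinearMap.mkPiAlgebra ℝ (Fin n) ℝ) ⟨fun i ↦ (hx i).1, fun i ↦ (hx i).2⟩
end

section
/- The LP relaxation of the SOS-2 constraints in the piecewise polyhedral relaxation (PPR) is always satisfiable: let n ≥ 1 and, for each i ∈ Fin n, let ℓ i = s(i,1) < s(i,2) < ⋯ < s(i,nᵢ) = u i be discretization points with nᵢ ≥ 2, let S = ∏ᵢ {s(i,1),…,s(i,nᵢ)} be the grid, and let λ : S → ℝ be nonnegative with ∑_{v ∈ S} λ(v) = 1. For r ∈ ℝ let λ(μᵢ(r)) = ∑ {λ(v) : v ∈ S, vᵢ = r}. Then for each i there exist real numbers y(i,1), …, y(i,nᵢ−1) ∈ [0,1] with ∑_{k=1}^{nᵢ−1} y(i,k) = 1 such that λ(μᵢ(s(i,1))) ≤ y(i,1), λ(μᵢ(s(i,k))) ≤ y(i,k−1)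 + y(i,k) for every k with 2 ≤ k ≤ nᵢ−1, and λ(μᵢ(s(i,nᵢ))) ≤ y(i,nᵢ−1). -/
/-!
Fix a coordinate `i` and charge the whole multiplier of every grid point to one interval of the
`i`-th partition: the one starting at the `i`-th coordinate of the grid point, or the last interval
if that coordinate is the right end of the partition. The masses so obtained are the required `y`:
they are nonnegative with the same total as the multipliers, and all grid points whose `i`-th
coordinate is a given discretization point are charged to a single interval adjacent to it.
-/

theorem injOn_Iio_of_lt_add_one {α : Type*} [Preorder α] {x : ℕ → α} {N : ℕ}
    (hx : ∀ k, k + 1 < N → x k < x (k + 1)) : Set.InjOn x (Set.Iio N) :=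
  (strictMonoOn_of_lt_add_one Set.ordConnected_Iio fun k _ _ hk => hx k hk).injOn

section IntervalMass

variable {Ω R : Type*} [AddCommMonoid R]

/-- The total weight charged to interval `k`, where `σ ∈ T` sits at discretization point `κ σ` and
charges its weight `w σ` to the interval starting there. Points are numbered `0, …, M + 1` and
intervals `0, …, M`; no interval starts at point `M + 1`, whose weight goes to interval `M`, hence
the truncation. -/
def intervalMass (T : Finset Ω) (κ : Ω → ℕ) (w : Ω → R) (M k : ℕ) : R :=
  ∑ σ ∈ T with min (κ σ) M = k, w σ

theorem sum_range_intervalMass (T : Finset Ω) (κ : Ω → ℕ) (w : Ω → R) (M : ℕ) :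
    ∑ k ∈ Finset.range (M + 1), intervalMass T κ w M k = ∑ σ ∈ T, w σ :=
  Finset.sum_fiberwise_of_maps_to
    (fun σ _ => Finset.mem_range_succ_iff.2 (min_le_right (κ σ) M)) w

variable [PartialOrder R] [IsOrderedAddMonoid R] {T : Finset Ω} {w : Ω → R}

theorem intervalMass_nonneg (hw : ∀ σ ∈ T, 0 ≤ w σ) (κ : Ω → ℕ) (M k : ℕ) :
    0 ≤ intervalMass T κ w M k :=
  Finset.sum_nonneg fun σ hσ => hw σ (Finset.mem_filter.1 hσ).1

theorem sum_filter_eq_le_intervalMass {α : Type*} [DecidableEq α] {κ : Ω → ℕ} {x : ℕ → α}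
    {I : Set ℕ} (hw : ∀ σ ∈ T, 0 ≤ w σ) (hx : Set.InjOn x I) (hκ : ∀ σ ∈ T, κ σ ∈ I)
    {k : ℕ} (hk : k ∈ I) (M : ℕ) :
    ∑ σ ∈ T with x (κ σ) = x k, w σ ≤ intervalMass T κ w M (min k M) := by
  refine Finset.sum_le_sum_of_subset_of_nonneg ?_ fun σ hσ _ => hw σ (Finset.mem_filter.1 hσ).1
  intro σ hσ
  obtain ⟨hσT, hσk⟩ := Finset.mem_filter.1 hσ
  have hκσ : κ σ = k := hx (hκ σ hσT) hk hσk
  exact Finset.mem_filter.2 ⟨hσT, by rw [hκσ]⟩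

end IntervalMass

section RelaxedSOS2

variable {R : Type*} [AddCommMonoidWithOne R] [PartialOrder R]

/-- The indicators `y` satisfy the LP relaxation of the SOS-2 constraints on a partition with `N`
points, where `p k` is the total multiplier of the `k`-th point. Numbering starts at `0`, so the
points are `0, …, N - 1` and the intervals `0, …, N - 2`, interval `k` joining the points `k` and
`k + 1`. The notion is meant for `2 ≤ N`. -/
def IsRelaxedSOS2 (N : ℕ) (p y : ℕ → R) : Prop :=
  (∀ k, k < N - 1 → 0 ≤ y k ∧ y k ≤ 1) ∧
  (∑ k ∈ Finset.range (N - 1), y k = 1) ∧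
  p 0 ≤ y 0 ∧
  (∀ k, 1 ≤ k → k ≤ N - 2 → p k ≤ y (k - 1) + y k) ∧
  p (N - 1) ≤ y (N - 2)

variable [IsOrderedAddMonoid R]

theorem isRelaxedSOS2_of_le_min {M : ℕ} {p y : ℕ → R} (hy : ∀ k ≤ M, 0 ≤ y k)
    (hsum : ∑ k ∈ Finset.range (M + 1), y k = 1) (hp : ∀ k < M + 2, p k ≤ y (min k M)) :
    IsRelaxedSOS2 (M + 2) p y := by
  refine ⟨fun k hk => ⟨hy k (Nat.le_of_lt_succ hk), ?_⟩, hsum, ?_, fun k _ (hkM : k ≤ M) => ?_, ?_⟩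
  · exact hsum ▸ Finset.single_le_sum (fun j hj => hy j (Finset.mem_range_succ_iff.1 hj))
      (Finset.mem_range.2 hk)
  · simpa using hp 0 (by lia)
  · calc
      p k ≤ y (min k M) := hp k (by lia)
      _ = y k := by rw [min_eq_left hkM]
      _ ≤ y (k - 1) + y k := le_add_of_nonneg_left (hy (k - 1) (by lia))
  · simpa using hp (M + 1) (by lia)

theorem ppr_sos2_lp_relaxation_satisfiable_general {Ω α : Type*} [DecidableEq α]
    {T : Finset Ω} {κ : Ω → ℕ} {N : ℕ} {x : ℕ → α} {w : Ω → R}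
    (hN : 2 ≤ N) (hx : Set.InjOn x (Set.Iio N)) (hκ : ∀ σ ∈ T, κ σ < N)
    (hw : ∀ σ ∈ T, 0 ≤ w σ) (hsum : ∑ σ ∈ T, w σ = 1) :
    ∃ y : ℕ → R, IsRelaxedSOS2 N (fun k => ∑ σ ∈ T with x (κ σ) = x k, w σ) y := by
  obtain ⟨M, rfl⟩ := Nat.exists_eq_add_of_le' hN
  exact ⟨intervalMass T κ w M, isRelaxedSOS2_of_le_min
    (fun k _ => intervalMass_nonneg hw κ M k)
    ((sum_range_intervalMass T κ w M).trans hsum)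
    (fun _ hk => sum_filter_eq_le_intervalMass hw hx hκ hk M)⟩

end RelaxedSOS2

/-- The LP relaxation of the SOS-2 constraints in the piecewise polyhedral relaxation
(PPR) of a multilinear term is always satisfiable.  Grid points are indexed (0-based) by
`σ : Fin n → ℕ` with `σ i < m i`; the grid point of `σ` is `fun i => s i (σ i)`, and
`λ(μᵢ(r))` is the sum of the multipliers over grid points whose `i`-th coordinate
equals `r`. -/
theorem ppr_sos2_lp_relaxation_satisfiable
    (n : ℕ) (hn : 1 ≤ n) (l u : Fin n → ℝ)
    (m : Fin n → ℕ) (hm : ∀ i, 2 ≤ m i)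
    (s : Fin n → ℕ → ℝ)
    (hmono : ∀ i, ∀ k, k + 1 < m i → s i k < s i (k + 1))
    (hsl : ∀ i, s i 0 = l i) (hsu : ∀ i, s i (m i - 1) = u i)
    (lam : (Fin n → ℕ) → ℝ)
    (hnn : ∀ σ ∈ Fintype.piFinset (fun i => Finset.range (m i)), 0 ≤ lam σ)
    (hsum : ∑ σ ∈ Fintype.piFinset (fun i => Finset.range (m i)), lam σ = 1) :
    ∀ i : Fin n, ∃ y : ℕ → ℝ,
      (∀ k, k < m i - 1 → 0 ≤ y k ∧ y k ≤ 1) ∧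
      (∑ k ∈ Finset.range (m i - 1), y k = 1) ∧
      (∑ σ ∈ (Fintype.piFinset (fun i' => Finset.range (m i'))).filter
          (fun σ => s i (σ i) = s i 0), lam σ) ≤ y 0 ∧
      (∀ k, 1 ≤ k → k ≤ m i - 2 →
        (∑ σ ∈ (Fintype.piFinset (fun i' => Finset.range (m i'))).filter
            (fun σ => s i (σ i) = s i k), lam σ) ≤ y (k - 1) + y k) ∧
      (∑ σ ∈ (Fintype.piFinset (fun i' => Finset.range (m i'))).filter
          (fun σ => s i (σ i) = s i (m i - 1)), lam σ) ≤ y (m i - 2) := by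
  exact fun i => ppr_sos2_lp_relaxation_satisfiable_general (κ := fun σ : Fin n → ℕ => σ i) (hm i)
    (injOn_Iio_of_lt_add_one (hmono i))
    (fun _ hσ => Finset.mem_range.1 (Fintype.mem_piFinset.1 hσ i)) hnn hsum
end

section
/- With binary indicator variables, the PPR constraints force the multipliers to be supported on the vertices of the active partition, so that any feasible point lies in the convex hull of the active sub-box's lifted vertices: let n ≥ 1 and, for each i ∈ Fin n, let ℓ i = s(i,1) < ⋯ < s(i,nᵢ) = u i be discretization points with nᵢ ≥ 2, and let S = ∏ᵢ {s(i,1),…,s(i,nᵢ)} be the grid. Suppose λ : S → ℝ is nonnegative with ∑_{v∈S} λ(v) = 1, and for each i suppose y(i,·) ∈ {0,1}^{nᵢ−1} with ∑_k y(i,k) = 1 and active index kᵢ (i.e., y(i,kᵢ) = 1), such that λ(μᵢ(s(i,1))) ≤ y(i,1), λ(μᵢ(s(i,k))) ≤ y(i,k−1) + y(i,k) for 2 ≤ k ≤ nᵢ−1, and λ(μᵢ(s(i,nᵢ))) ≤ y(i,nᵢ−1). Then every grid point v ∈ S with λ(v) > 0 satisfies vᵢ ∈ {s(i,kᵢ),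 s(i,kᵢ+1)} for all i; consequently, with φ(x) = ∏ᵢ xᵢ, the point (∑_{v∈S} λ(v)·v, ∑_{v∈S} λ(v)·φ(v)) lies in the convex hull over ℝ of the lifted vertices {(v, φ(v)) : vᵢ ∈ {s(i,kᵢ), s(i,kᵢ+1)} for all i} of the active sub-box ∏ᵢ [s(i,kᵢ), s(i,kᵢ+1)]. -/
/-!
Since `y i` is a nonnegative vector with total mass `1` and `y i (k i) = 1`, it vanishes at every
index other than `k i`. The linking constraints then bound by `0` the weight of every slice of the
grid at a breakpoint other than `k i` and `k i + 1`; as the multipliers are nonnegative, all of them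
vanish there. The point in question is therefore a convex combination of the lifted vertices of the
active cell, whatever the lifted function `φ` is.
-/

theorem eq_zero_of_sum_eq_apply_of_nonneg {α R : Type*} [AddCommMonoid R] [PartialOrder R]
    [IsOrderedCancelAddMonoid R] {t : Finset α} {f : α → R} {a b : α}
    (hf : ∀ i ∈ t, 0 ≤ f i) (ha : a ∈ t) (hsum : ∑ i ∈ t, f i = f a) (hb : b ∈ t) (hba : b ≠ a) :
    f b = 0 := by
  classical
  have hrest : ∑ i ∈ t.erase a, f i = 0 := by
    rw [← Finset.add_sum_erase t f ha] at hsum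
    exact add_eq_left.mp hsum
  exact (Finset.sum_eq_zero_iff_of_nonneg fun i hi ↦ hf i (Finset.mem_of_mem_erase hi)).mp hrest b
    (Finset.mem_erase.mpr ⟨hba, hb⟩)

theorem sum_smul_mem_of_forall_pos {α 𝕜 E : Type*} [Field 𝕜] [LinearOrder 𝕜]
    [IsStrictOrderedRing 𝕜] [AddCommGroup E] [Module 𝕜 E] {C : Set E} (hC : Convex 𝕜 C)
    {t : Finset α} {w : α → 𝕜} {z : α → E} (hw : ∀ a ∈ t, 0 ≤ w a) (hsum : ∑ a ∈ t, w a = 1)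
    (hz : ∀ a ∈ t, 0 < w a → z a ∈ C) :
    ∑ a ∈ t, w a • z a ∈ C := by
  have hpos : ∀ a ∈ t, w a ≠ 0 → 0 < w a := fun a ha hne ↦ (hw a ha).lt_of_ne' hne
  have hsum' : ∑ a ∈ t with 0 < w a, w a = 1 := (Finset.sum_filter_of_ne hpos).trans hsum
  have hcomb : ∑ a ∈ t with 0 < w a, w a • z a = ∑ a ∈ t, w a • z a :=
    Finset.sum_filter_of_ne fun a ha hne ↦ hpos a ha (left_ne_zero_of_smul hne)
  rw [← hcomb]
  refine hC.sum_mem (fun a ha ↦ ?_) hsum' fun a ha ↦ ?_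
  · exact (Finset.mem_filter.mp ha).2.le
  · exact hz a (Finset.mem_filter.mp ha).1 (Finset.mem_filter.mp ha).2

/-- The PPR constraints linking, for one variable with breakpoints `0, …, N - 1`, the weights `w`
of the breakpoints to the indicators `y` of the intervals; interval `j` joins breakpoints `j` and
`j + 1`. The truncated subtractions are meant for `2 ≤ N`. -/
structure LinkingConstraints {R : Type*} [Add R] [LE R] (N : ℕ) (w y : ℕ → R) : Prop where
  first : w 0 ≤ y 0
  interior : ∀ j, 1 ≤ j → j ≤ N - 2 → w j ≤ y (j - 1) + y j
  last : w (N - 1) ≤ y (N - 2)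

theorem LinkingConstraints.nonpos_of_inactive {R : Type*} [AddZeroClass R] [LE R] {N : ℕ}
    {w y : ℕ → R} (h : LinkingConstraints N w y) {k j : ℕ} (hk : k < N - 1)
    (hy : ∀ j' < N - 1, j' ≠ k → y j' = 0) (hj : j < N) (hjk : j ≠ k) (hjk' : j ≠ k + 1) :
    w j ≤ 0 := by
  obtain rfl | hj0 := eq_or_ne j 0
  · simpa only [hy 0 (by omega) (by omega)] using h.first
  obtain rfl | hjN := eq_or_ne j (N - 1)
  · simpa only [hy (N - 2) (by omega) (by omega)] using h.last
  · simpa only [hy (j - 1) (by omega) (by omega), hy j (by omega) hjk, add_zero] using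
      h.interior j (by omega) (by omega)

section Grid

variable {ι 𝕜 F : Type*} {E : ι → Type*}

/-- The graph of `φ` over the vertices of the cell in which variable `i` ranges over its interval
`k i`. -/
def liftedVertices (φ : (∀ i, E i) → F) (s : ∀ i, ℕ → E i) (k : ι → ℕ) : Set ((∀ i, E i) × F) :=
  {p | ∃ v : ∀ i, E i, (∀ i, v i = s i (k i) ∨ v i = s i (k i + 1)) ∧ p = (v, φ v)}

theorem sum_smul_mem_convexHull_liftedVertices [Field 𝕜] [LinearOrder 𝕜] [IsStrictOrderedRing 𝕜]
    [∀ i, AddCommGroup (E i)] [∀ i, Module 𝕜 (E i)] [AddCommGroup F] [Module 𝕜 F]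
    (φ : (∀ i, E i) → F) (s : ∀ i, ℕ → E i) {k : ι → ℕ} {t : Finset (ι → ℕ)}
    {lam : (ι → ℕ) → 𝕜} (hlam : ∀ σ ∈ t, 0 ≤ lam σ) (hsum : ∑ σ ∈ t, lam σ = 1)
    (hsupp : ∀ σ ∈ t, 0 < lam σ → ∀ i, σ i = k i ∨ σ i = k i + 1) :
    ((fun i ↦ ∑ σ ∈ t, lam σ • s i (σ i)), ∑ σ ∈ t, lam σ • φ fun i ↦ s i (σ i)) ∈
      convexHull 𝕜 (liftedVertices φ s k) := by
  have hmem : ∑ σ ∈ t, lam σ • ((fun i ↦ s i (σ i) : ∀ i, E i), φ fun i ↦ s i (σ i)) ∈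
      convexHull 𝕜 (liftedVertices φ s k) :=
    sum_smul_mem_of_forall_pos (convex_convexHull 𝕜 _) hlam hsum fun σ hσ hpos ↦
      subset_convexHull 𝕜 _
        ⟨_, fun i ↦ (hsupp σ hσ hpos i).imp (congrArg (s i)) (congrArg (s i)), rfl⟩
  convert hmem using 1
  ext <;> simp only [Prod.fst_sum, Prod.snd_sum, Prod.smul_mk, Finset.sum_apply, Pi.smul_apply]

variable [Fintype ι] [DecidableEq ι]

/-- The grid `S`, encoded by multi-indices: `σ` stands for the grid point `fun i ↦ s i (σ i)`. -/
def gridIndices (m : ι → ℕ) : Finset (ι → ℕ) :=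
  Fintype.piFinset fun i ↦ Finset.range (m i)

/-- The paper's `λ(μᵢ(r))`: the total multiplier of the grid points with `i`-th coordinate `r`. -/
def sliceWeight [AddCommMonoid 𝕜] [∀ i, DecidableEq (E i)] (m : ι → ℕ) (s : ∀ i, ℕ → E i)
    (lam : (ι → ℕ) → 𝕜) (i : ι) (r : E i) : 𝕜 :=
  ∑ σ ∈ gridIndices m with s i (σ i) = r, lam σ

theorem le_sliceWeight [AddCommMonoid 𝕜] [PartialOrder 𝕜] [IsOrderedAddMonoid 𝕜]
    [∀ i, DecidableEq (E i)] {m : ι → ℕ} {lam : (ι → ℕ) → 𝕜}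
    (hlam : ∀ σ ∈ gridIndices m, 0 ≤ lam σ) (s : ∀ i, ℕ → E i) {σ : ι → ℕ}
    (hσ : σ ∈ gridIndices m) (i : ι) :
    lam σ ≤ sliceWeight m s lam i (s i (σ i)) :=
  Finset.single_le_sum (fun τ hτ ↦ hlam τ (Finset.mem_filter.mp hτ).1)
    (Finset.mem_filter.mpr ⟨hσ, rfl⟩)

theorem eq_or_eq_succ_of_linkingConstraints [AddCommMonoid 𝕜] [PartialOrder 𝕜]
    [IsOrderedAddMonoid 𝕜] [∀ i, DecidableEq (E i)] {m : ι → ℕ} {s : ∀ i, ℕ → E i}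
    {lam : (ι → ℕ) → 𝕜} (hlam : ∀ σ ∈ gridIndices m, 0 ≤ lam σ) {i : ι} {k : ℕ} {y : ℕ → 𝕜}
    (hk : k < m i - 1) (hy : ∀ j < m i - 1, j ≠ k → y j = 0)
    (hlink : LinkingConstraints (m i) (fun j ↦ sliceWeight m s lam i (s i j)) y)
    {σ : ι → ℕ} (hσ : σ ∈ gridIndices m) (hpos : 0 < lam σ) :
    σ i = k ∨ σ i = k + 1 := by
  by_contra! hne
  have hlt : σ i < m i := Finset.mem_range.mp (Fintype.mem_piFinset.mp hσ i)
  have hslice : sliceWeight m s lam i (s i (σ i)) ≤ 0 :=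
    hlink.nonpos_of_inactive hk hy hlt hne.1 hne.2
  exact hpos.not_ge ((le_sliceWeight hlam s hσ i).trans hslice)

theorem ppr_binary_forces_active_partition_general [Field 𝕜] [LinearOrder 𝕜]
    [IsStrictOrderedRing 𝕜] [∀ i, AddCommGroup (E i)] [∀ i, Module 𝕜 (E i)]
    [∀ i, DecidableEq (E i)] [AddCommGroup F] [Module 𝕜 F] (φ : (∀ i, E i) → F) {m k : ι → ℕ}
    {s : ∀ i, ℕ → E i} {lam : (ι → ℕ) → 𝕜} (hlam : ∀ σ ∈ gridIndices m, 0 ≤ lam σ)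
    (hsum : ∑ σ ∈ gridIndices m, lam σ = 1) {y : ι → ℕ → 𝕜}
    (hy : ∀ i, ∀ j < m i - 1, 0 ≤ y i j) (hysum : ∀ i, ∑ j ∈ Finset.range (m i - 1), y i j = 1)
    (hk : ∀ i, k i < m i - 1) (hact : ∀ i, y i (k i) = 1)
    (hlink : ∀ i, LinkingConstraints (m i) (fun j ↦ sliceWeight m s lam i (s i j)) (y i)) :
    (∀ σ ∈ gridIndices m, 0 < lam σ → ∀ i, σ i = k i ∨ σ i = k i + 1) ∧
      ((fun i ↦ ∑ σ ∈ gridIndices m, lam σ • s i (σ i)),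
        ∑ σ ∈ gridIndices m, lam σ • φ fun i ↦ s i (σ i)) ∈
      convexHull 𝕜 (liftedVertices φ s k) := by
  have hyzero : ∀ i, ∀ j < m i - 1, j ≠ k i → y i j = 0 := fun i j hj hne ↦
    eq_zero_of_sum_eq_apply_of_nonneg (fun j' hj' ↦ hy i j' (Finset.mem_range.mp hj'))
      (Finset.mem_range.mpr (hk i)) ((hysum i).trans (hact i).symm) (Finset.mem_range.mpr hj) hne
  have hsupp : ∀ σ ∈ gridIndices m, 0 < lam σ → ∀ i, σ i = k i ∨ σ i = k i + 1 :=
    fun σ hσ hpos i ↦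
      eq_or_eq_succ_of_linkingConstraints hlam (hk i) (hyzero i) (hlink i) hσ hpos
  exact ⟨hsupp, sum_smul_mem_convexHull_liftedVertices φ s hlam hsum hsupp⟩

end Grid

/-- With binary indicator variables, the SOS-2 constraints of the PPR force the
multipliers to be supported on the grid points whose coordinates are endpoints of the
active partition intervals; consequently the point represented by the multipliers lies in
the convex hull of the lifted vertices of the active sub-box.  Grid points are indexed
(0-based) by `σ : Fin n → ℕ` with `σ i < m i`; the grid point of `σ` is
`fun i => s i (σ i)`, and the active interval of variable `i` is
`[s i (k i), s i (k i + 1)]`. -/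
theorem ppr_binary_forces_active_partition
    (n : ℕ) (hn : 1 ≤ n) (l u : Fin n → ℝ)
    (m : Fin n → ℕ) (hm : ∀ i, 2 ≤ m i)
    (s : Fin n → ℕ → ℝ)
    (hmono : ∀ i, ∀ k', k' + 1 < m i → s i k' < s i (k' + 1))
    (hsl : ∀ i, s i 0 = l i) (hsu : ∀ i, s i (m i - 1) = u i)
    (lam : (Fin n → ℕ) → ℝ)
    (hnn : ∀ σ ∈ Fintype.piFinset (fun i => Finset.range (m i)), 0 ≤ lam σ)
    (hsum : ∑ σ ∈ Fintype.piFinset (fun i => Finset.range (m i)), lam σ = 1)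
    (y : Fin n → ℕ → ℝ)
    (hybin : ∀ i, ∀ k', k' < m i - 1 → y i k' = 0 ∨ y i k' = 1)
    (hysum : ∀ i, ∑ k' ∈ Finset.range (m i - 1), y i k' = 1)
    (k : Fin n → ℕ) (hk : ∀ i, k i < m i - 1) (hact : ∀ i, y i (k i) = 1)
    (hc1 : ∀ i, (∑ σ ∈ (Fintype.piFinset (fun i' => Finset.range (m i'))).filter
        (fun σ => s i (σ i) = s i 0), lam σ) ≤ y i 0)
    (hc2 : ∀ i, ∀ k', 1 ≤ k' → k' ≤ m i - 2 →
      (∑ σ ∈ (Fintype.piFinset (fun i' => Finset.range (m i'))).filter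
          (fun σ => s i (σ i) = s i k'), lam σ) ≤ y i (k' - 1) + y i k')
    (hc3 : ∀ i, (∑ σ ∈ (Fintype.piFinset (fun i' => Finset.range (m i'))).filter
        (fun σ => s i (σ i) = s i (m i - 1)), lam σ) ≤ y i (m i - 2)) :
    (∀ σ ∈ Fintype.piFinset (fun i => Finset.range (m i)), 0 < lam σ →
      ∀ i, s i (σ i) = s i (k i) ∨ s i (σ i) = s i (k i + 1)) ∧
    ((fun i => ∑ σ ∈ Fintype.piFinset (fun i' => Finset.range (m i')),
        lam σ * s i (σ i)),
      ∑ σ ∈ Fintype.piFinset (fun i' => Finset.range (m i')),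
        lam σ * ∏ i, s i (σ i)) ∈
      convexHull ℝ {p : (Fin n → ℝ) × ℝ |
        ∃ v : Fin n → ℝ, (∀ i, v i = s i (k i) ∨ v i = s i (k i + 1)) ∧
          p = (v, ∏ i, v i)} := by
  have hy : ∀ i, ∀ j < m i - 1, 0 ≤ y i j := fun i j hj ↦ by
    rcases hybin i j hj with h | h <;> simp [h]
  obtain ⟨hsupp, hhull⟩ := ppr_binary_forces_active_partition_general (fun v ↦ ∏ i, v i)
    hnn hsum hy hysum hk hact fun i ↦ ⟨hc1 i, hc2 i, hc3 i⟩
  exact ⟨fun σ hσ hpos i ↦ (hsupp σ hσ hpos i).imp (congrArg (s i)) (congrArg (s i)), hhull⟩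
end

section
/- The PPR is a valid relaxation of the graph of a multilinear term: let n ≥ 1 and, for each i ∈ Fin n, let ℓ i = s(i,1) < ⋯ < s(i,nᵢ) = u i be discretization points with nᵢ ≥ 2, and let φ(x) = ∏ᵢ xᵢ. Then for every x ∈ ℝⁿ with ℓ i ≤ x i ≤ u i for all i, there exist indices kᵢ ∈ {1,…,nᵢ−1} such that s(i,kᵢ) ≤ x i ≤ s(i,kᵢ+1) for all i, and the lifted point (x, φ(x)) lies in the convex hull over ℝ of the lifted vertices {(v, φ(v)) : v ∈ ℝⁿ, vᵢ ∈ {s(i,kᵢ), s(i,kᵢ+1)} for all i} of the sub-box ∏ᵢ [s(i,kᵢ), s(i,kᵢ+1)]. -/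
/-!
A multilinear term is affine in each variable separately, and so is its lifting `v ↦ (v, φ v)`.
An affine map sends convex hulls to convex hulls, so the vertices of a sub-box can be mixed one
coordinate at a time: the coordinate `x j` of a point is a convex combination of the two endpoints
of its interval, and its lifted point is the same combination of the lifted points with `x j`
replaced by either endpoint.
-/

open Function Set

section SeparatelyAffine

variable {ι 𝕜 F G : Type*} {E : ι → Type*} [DecidableEq ι]
  [Ring 𝕜] [∀ i, AddCommGroup (E i)] [∀ i, Module 𝕜 (E i)]
  [AddCommGroup F] [Module 𝕜 F] [AddCommGroup G] [Module 𝕜 G]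

variable (𝕜) in
/-- A map of several variables is separately affine (multiaffine) if it is an affine map of each
variable when the others are kept fixed. The multilinear maps and their liftings to the graph are
the examples of interest. -/
def IsSeparatelyAffine (f : (∀ i, E i) → F) : Prop :=
  ∀ x i, ∃ g : E i →ᵃ[𝕜] F, ∀ y, f (update x i y) = g y

theorem isSeparatelyAffine_multilinearMap (f : MultilinearMap 𝕜 E F) : IsSeparatelyAffine 𝕜 f :=
  fun x i ↦ ⟨(f.toLinearMap x i).toAffineMap, fun _ ↦ rfl⟩

theorem isSeparatelyAffine_id : IsSeparatelyAffine 𝕜 (id : (∀ i, E i) → ∀ i, E i) := fun x i ↦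
  ⟨(LinearMap.single 𝕜 E i).toAffineMap + AffineMap.const 𝕜 (E i) (update x i 0), fun y ↦ by
    ext j; obtain rfl | hj := eq_or_ne j i <;> simp [*]⟩

theorem IsSeparatelyAffine.prodMk {f : (∀ i, E i) → F} {g : (∀ i, E i) → G}
    (hf : IsSeparatelyAffine 𝕜 f) (hg : IsSeparatelyAffine 𝕜 g) :
    IsSeparatelyAffine 𝕜 fun x ↦ (f x, g x) := fun x i ↦ by
  obtain ⟨f', hf'⟩ := hf x i
  obtain ⟨g', hg'⟩ := hg x i
  exact ⟨f'.prod g', fun y ↦ Prod.ext (hf' y) (hg' y)⟩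

theorem IsSeparatelyAffine.map_mem_convexHull [PartialOrder 𝕜] [Finite ι]
    {f : (∀ i, E i) → F} (hf : IsSeparatelyAffine 𝕜 f) {t : ∀ i, Set (E i)} {x : ∀ i, E i}
    (hx : ∀ i, x i ∈ convexHull 𝕜 (t i)) :
    f x ∈ convexHull 𝕜 (f '' univ.pi t) := by
  have := Fintype.ofFinite ι
  suffices h : ∀ (T : Finset ι) (x : ∀ i, E i), (∀ i ∈ T, x i ∈ convexHull 𝕜 (t i)) →
      (∀ i ∉ T, x i ∈ t i) → f x ∈ convexHull 𝕜 (f '' univ.pi t) from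
    h Finset.univ x (fun i _ ↦ hx i) (by simp)
  intro T
  induction T using Finset.induction_on with
  | empty =>
    exact fun x _ hxt ↦ subset_convexHull 𝕜 _ (mem_image_of_mem f fun i _ ↦ hxt i (by simp))
  | insert j T hj ih =>
    intro x hxT hxt
    obtain ⟨g, hg⟩ := hf x j
    have hvertex : g '' t j ⊆ convexHull 𝕜 (f '' univ.pi t) := by
      rintro _ ⟨y, hy, rfl⟩
      rw [← hg]
      refine ih _ (fun i hi ↦ ?_) (fun i hi ↦ ?_)
      · rw [update_of_ne (ne_of_mem_of_not_mem hi hj)]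
        exact hxT i (Finset.mem_insert_of_mem hi)
      · obtain rfl | hij := eq_or_ne i j
        · simpa using hy
        · simpa [hij] using hxt i (by simp [hij, hi])
    have hfx : f x ∈ g '' convexHull 𝕜 (t j) :=
      ⟨x j, hxT j (Finset.mem_insert_self j T), by rw [← hg, update_eq_self]⟩
    rw [g.image_convexHull] at hfx
    exact convexHull_min hvertex (convex_convexHull 𝕜 _) hfx

end SeparatelyAffine

theorem exists_lt_mem_Icc_succ {α : Type*} [LinearOrder α] {s : ℕ → α} {N : ℕ} (hN : 0 < N)
    {x : α} (hx : x ∈ Icc (s 0) (s N)) : ∃ k < N, x ∈ Icc (s k) (s (k + 1)) := by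
  induction N, hN using Nat.le_induction with
  | base => exact ⟨0, zero_lt_one, hx⟩
  | succ N _ ih =>
    obtain hxN | hNx := le_total x (s N)
    · obtain ⟨k, hk, hxk⟩ := ih ⟨hx.1, hxN⟩
      exact ⟨k, hk.trans N.lt_succ_self, hxk⟩
    · exact ⟨N, N.lt_succ_self, hNx, hx.2⟩

theorem ppr_valid_relaxation_general {ι 𝕜 F : Type*} [Finite ι] [DecidableEq ι]
    [Field 𝕜] [LinearOrder 𝕜] [IsStrictOrderedRing 𝕜] [AddCommGroup F] [Module 𝕜 F]
    {f : (ι → 𝕜) → F} (hf : IsSeparatelyAffine 𝕜 f) {s : ι → ℕ → 𝕜} {N : ι → ℕ}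
    (hN : ∀ i, 0 < N i) {x : ι → 𝕜} (hx : ∀ i, x i ∈ Icc (s i 0) (s i (N i))) :
    ∃ k : ι → ℕ, (∀ i, k i < N i) ∧ (∀ i, x i ∈ Icc (s i (k i)) (s i (k i + 1))) ∧
      (x, f x) ∈ convexHull 𝕜
        ((fun v ↦ (v, f v)) '' univ.pi fun i ↦ {s i (k i), s i (k i + 1)}) := by
  choose k hkN hxk using fun i ↦ exists_lt_mem_Icc_succ (hN i) (hx i)
  refine ⟨k, hkN, hxk, (isSeparatelyAffine_id.prodMk hf).map_mem_convexHull fun i ↦ ?_⟩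
  rw [convexHull_pair, segment_eq_Icc ((hxk i).1.trans (hxk i).2)]
  exact hxk i

/-- The PPR is a valid relaxation of the graph of a multilinear term: every point of the
box lies in some sub-box of the partition, and its lifted point lies in the convex hull
of the lifted vertices of that sub-box.  Discretization points of variable `i` are
`s i 0 < s i 1 < ⋯ < s i (m i - 1)` (0-based), with `s i 0 = l i` and
`s i (m i - 1) = u i`. -/
theorem ppr_valid_relaxation
    (n : ℕ) (hn : 1 ≤ n) (l u : Fin n → ℝ)
    (m : Fin n → ℕ) (hm : ∀ i, 2 ≤ m i)
    (s : Fin n → ℕ → ℝ)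
    (hmono : ∀ i, ∀ k', k' + 1 < m i → s i k' < s i (k' + 1))
    (hsl : ∀ i, s i 0 = l i) (hsu : ∀ i, s i (m i - 1) = u i)
    (x : Fin n → ℝ) (hx : ∀ i, l i ≤ x i ∧ x i ≤ u i) :
    ∃ k : Fin n → ℕ, (∀ i, k i < m i - 1) ∧
      (∀ i, s i (k i) ≤ x i ∧ x i ≤ s i (k i + 1)) ∧
      (x, ∏ i, x i) ∈ convexHull ℝ {p : (Fin n → ℝ) × ℝ |
        ∃ v : Fin n → ℝ, (∀ i, v i = s i (k i) ∨ v i = s i (k i + 1)) ∧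
          p = (v, ∏ i, v i)} := by
  simpa [image, eq_comm] using ppr_valid_relaxation_general (s := s)
    (isSeparatelyAffine_multilinearMap (MultilinearMap.mkPiAlgebra ℝ (Fin n) ℝ))
    (fun i ↦ Nat.sub_pos_of_lt (hm i)) (fun i ↦ by rw [hsl, hsu]; exact hx i)
end

section
/- Exactness of the MILP edge-based recovery formulation: let n ≥ 1 and ℓ, u : Fin n → ℝ with ℓ i < u i for all i, let φ(x) = ∏ᵢ xᵢ, let V = {v ∈ ℝⁿ : vᵢ ∈ {ℓ i, u i} for all i} be the set of vertices of the box, and let E be the set of (unordered) pairs of vertices that differ in exactly one coordinate. Suppose λ : V → ℝ is nonnegative with ∑_{v∈V} λ(v) = 1, and z : E → {0,1} satisfies ∑_{e∈E} z(e) = 1 and, for every v ∈ V, λ(v) ≤ ∑ {z(e) : e ∈ E, v is an endpoint of e}. Then the point x = ∑_{v∈V} λ(v)·v and the value w = ∑_{v∈V} λ(v)·φ(v) satisfy w = φ(x); that is, (x,w) lies on the graph of the multilinear term. -/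
/-!
Binary multipliers summing to one single out one active edge, and the incidence inequalities then
force every vertex with nonzero weight to be an endpoint of it. The endpoints of an edge lie on a
line parallel to a coordinate axis, and the restriction of a multilinear map to such a line is
affine, so it commutes with the convex combination.
-/

theorem existsUnique_eq_one_of_sum_eq_one {ε R : Type*} [AddCommMonoidWithOne R] [CharZero R]
    {E : Finset ε} {z : ε → R} (hz : ∀ e ∈ E, z e = 0 ∨ z e = 1) (hsum : ∑ e ∈ E, z e = 1) :
    ∃! e, e ∈ E ∧ z e = 1 := by
  classical
  have z_eq_ite : ∀ e ∈ E, z e = if z e = 1 then 1 else 0 := fun e he ↦ by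
    rcases hz e he with h | h <;> simp [h]
  have card_eq_one : (E.filter (z · = 1)).card = 1 := by
    rw [Finset.sum_congr rfl z_eq_ite, Finset.sum_boole] at hsum
    exact_mod_cast hsum
  simpa only [Finset.mem_filter] using Finset.card_eq_one_iff_existsUnique.mp card_eq_one

theorem exists_forall_incident_of_le_sum {α ε R : Type*} [AddCommMonoidWithOne R] [CharZero R]
    [PartialOrder R] {r : α → ε → Prop} [∀ v, DecidablePred (r v)] {V : Finset α} {E : Finset ε}
    {c : α → R} {z : ε → R} (hc : ∀ v ∈ V, 0 ≤ c v) (hz : ∀ e ∈ E, z e = 0 ∨ z e = 1)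
    (hsum : ∑ e ∈ E, z e = 1) (hle : ∀ v ∈ V, c v ≤ ∑ e ∈ E with r v e, z e) :
    ∃ e ∈ E, ∀ v ∈ V, c v ≠ 0 → r v e := by
  obtain ⟨e₀, ⟨he₀, -⟩, huniq⟩ := existsUnique_eq_one_of_sum_eq_one hz hsum
  refine ⟨e₀, he₀, fun v hv ↦ Not.imp_symm fun hnot ↦ ?_⟩
  have inactive : ∑ e ∈ E with r v e, z e = 0 := Finset.sum_eq_zero fun e he ↦ by
    obtain ⟨heE, hre⟩ := Finset.mem_filter.mp he
    exact (hz e heE).resolve_right fun h1 ↦ hnot (huniq e ⟨heE, h1⟩ ▸ hre)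
  exact le_antisymm (inactive ▸ hle v hv) (hc v hv)

section CoordinateLine

variable {ι κ R : Type*} {M : ι → Type*} {N : Type*} [Semiring R]
  [∀ i, AddCommMonoid (M i)] [∀ i, Module R (M i)] [AddCommMonoid N] [Module R N]

theorem sum_smul_eq_update_of_forall_ne [DecidableEq ι] {s : Finset κ} {c : κ → R}
    {p : κ → ∀ i, M i} {a : ∀ i, M i} {j : ι} (hc : ∑ k ∈ s, c k = 1)
    (hp : ∀ k ∈ s, c k ≠ 0 → ∀ i ≠ j, p k i = a i) :
    ∑ k ∈ s, c k • p k = Function.update a j (∑ k ∈ s, c k • p k j) := by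
  refine Function.eq_update_iff.mpr ⟨by simp only [Finset.sum_apply, Pi.smul_apply], fun i hi ↦ ?_⟩
  have smul_eq : ∀ k ∈ s, c k • p k i = c k • a i := fun k hk ↦ by
    by_cases hck : c k = 0
    · simp only [hck, zero_smul]
    · rw [hp k hk hck i hi]
  simp only [Finset.sum_apply, Pi.smul_apply]
  rw [Finset.sum_congr rfl smul_eq, ← Finset.sum_smul, hc, one_smul]

theorem multilinearMap_sum_smul_of_forall_ne (f : MultilinearMap R M N) {s : Finset κ} {c : κ → R}
    {p : κ → ∀ i, M i} {a : ∀ i, M i} {j : ι} (hc : ∑ k ∈ s, c k = 1)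
    (hp : ∀ k ∈ s, c k ≠ 0 → ∀ i ≠ j, p k i = a i) :
    f (∑ k ∈ s, c k • p k) = ∑ k ∈ s, c k • f (p k) := by
  classical
  have smul_map_update : ∀ k ∈ s, c k • f (Function.update a j (p k j)) = c k • f (p k) := by
    intro k hk
    by_cases hck : c k = 0
    · simp only [hck, zero_smul]
    · rw [Function.update_eq_iff.mpr ⟨rfl, fun i hi ↦ (hp k hk hck i hi).symm⟩]
  rw [sum_smul_eq_update_of_forall_ne hc hp, f.map_update_sum]
  simp only [f.map_update_smul]
  exact Finset.sum_congr rfl smul_map_update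

end CoordinateLine

/-- The two points of `e` differ in at most one coordinate, as the endpoints of an edge of a box
do. -/
def IsAxisParallel {ι : Type*} {M : ι → Type*} (e : Sym2 (∀ i, M i)) : Prop :=
  ∃ j, ∀ v ∈ e, ∀ w ∈ e, ∀ i ≠ j, v i = w i

theorem isAxisParallel_mk_iff {ι : Type*} {M : ι → Type*} {v w : ∀ i, M i} :
    IsAxisParallel s(v, w) ↔ ∃ j, ∀ i ≠ j, v i = w i := by
  refine ⟨fun ⟨j, hj⟩ ↦ ⟨j, hj v (Sym2.mem_mk_left v w) w (Sym2.mem_mk_right v w)⟩,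
    fun ⟨j, hj⟩ ↦ ⟨j, fun x hx y hy i hi ↦ ?_⟩⟩
  rcases Sym2.mem_iff.mp hx with rfl | rfl <;> rcases Sym2.mem_iff.mp hy with rfl | rfl <;>
    simp only [hj i hi]

theorem milp_edge_recovery_exact_general {ι R : Type*} {M : ι → Type*} {N : Type*}
    [Semiring R] [PartialOrder R] [IsStrictOrderedRing R]
    [∀ i, AddCommMonoid (M i)] [∀ i, Module R (M i)] [AddCommMonoid N] [Module R N]
    [DecidableEq (∀ i, M i)] (f : MultilinearMap R M N)
    {V : Finset (∀ i, M i)} {E : Finset (Sym2 (∀ i, M i))} (hE : ∀ e ∈ E, IsAxisParallel e)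
    {lam : (∀ i, M i) → R} (hnn : ∀ v ∈ V, 0 ≤ lam v) (hsum : ∑ v ∈ V, lam v = 1)
    {z : Sym2 (∀ i, M i) → R} (hzbin : ∀ e ∈ E, z e = 0 ∨ z e = 1) (hzsum : ∑ e ∈ E, z e = 1)
    (hinc : ∀ v ∈ V, lam v ≤ ∑ e ∈ E with v ∈ e, z e) :
    ∑ v ∈ V, lam v • f v = f (∑ v ∈ V, lam v • v) := by
  obtain ⟨e, he, hsupp⟩ := exists_forall_incident_of_le_sum hnn hzbin hzsum hinc
  obtain ⟨j, hj⟩ := hE e he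
  exact (multilinearMap_sum_smul_of_forall_ne f hsum
    fun v hv hne ↦ hj v (hsupp v hv hne) e.out.1 e.out_fst_mem).symm

open scoped Classical in
/-- Exactness of the MILP edge-based recovery formulation: if the vertex multipliers `lam`
form a convex combination which, via binary edge indicators `z` with exactly one active
edge and `lam v ≤ ∑_{e ∈ γ(v)} z e`, is supported on the endpoints of a single edge of
the box, then the recovered point `(x, w)` lies on the graph of the multilinear term.
Here `V` is the (finite) set of vertices of the box and `E` the (finite) set of unordered
pairs of vertices differing in exactly one coordinate. -/
theorem milp_edge_recovery_exact
    (n : ℕ) (hn : 1 ≤ n) (l u : Fin n → ℝ) (hlu : ∀ i, l i < u i)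
    (V : Finset (Fin n → ℝ))
    (hV : ∀ v : Fin n → ℝ, v ∈ V ↔ ∀ i, v i = l i ∨ v i = u i)
    (E : Finset (Sym2 (Fin n → ℝ)))
    (hE : ∀ e : Sym2 (Fin n → ℝ), e ∈ E ↔
      ∃ v w : Fin n → ℝ, (∀ i, v i = l i ∨ v i = u i) ∧
        (∀ i, w i = l i ∨ w i = u i) ∧ (∃! j, v j ≠ w j) ∧ e = s(v, w))
    (lam : (Fin n → ℝ) → ℝ)
    (hnn : ∀ v ∈ V, 0 ≤ lam v) (hsum : ∑ v ∈ V, lam v = 1)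
    (z : Sym2 (Fin n → ℝ) → ℝ)
    (hzbin : ∀ e ∈ E, z e = 0 ∨ z e = 1)
    (hzsum : ∑ e ∈ E, z e = 1)
    (hinc : ∀ v ∈ V, lam v ≤ ∑ e ∈ E.filter (fun e => v ∈ e), z e) :
    (∑ v ∈ V, lam v * ∏ i, v i) = ∏ i, (∑ v ∈ V, lam v • v) i := by
  have axisParallel : ∀ e ∈ E, IsAxisParallel e := fun e he ↦ by
    obtain ⟨v, w, -, -, ⟨j, -, huniq⟩, rfl⟩ := (hE e).mp he
    exact isAxisParallel_mk_iff.mpr ⟨j, fun i hi ↦ not_imp_comm.mp (huniq i) hi⟩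
  exact milp_edge_recovery_exact_general (MultilinearMap.mkPiAlgebra ℝ (Fin n) ℝ)
    axisParallel hnn hsum hzbin hzsum hinc
end
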